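/- arXiv:2507.13189 — 2 statements merged into one kernel-verified Lean document; each statement's English description precedes it below -/
import Mathlib

section
/- Let $\Omega \subset \mathcal{D}$ be an open set satisfying $\Omega \setminus \overline{\mathcal{C}} = E_0 \setminus \overline{\mathcal{C}}$, suppose $\mathcal{A}^+ := E_0 \setminus \overline{\mathcal{C}}$ is a domain of isoperimetry, and suppose there is $C > 0$ such that for every open $\tilde\omega \subset \Omega$ with $\tilde\omega \setminus \overline{\mathcal{C}} = E_0 \setminus \overline{\mathcal{C}}$ one has $|\Omega \setminus \tilde\omega| \leq C\, P(\tilde\omega, \Omega)^{N/(N-1)}$. Then $\Omega$ is a domain of isoperimetry: there is $C' > 0$ such that $\min(|\omega|, |\Omega \setminus \omega|) \leq C'\, \mathcal{H}^{N-1}(\partial\omega \cap \Omega)^{N/(N-1)}$ for all open $\omega \subset \Omega$. -/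
open MeasureTheory Metric Filter Set Bornology
open scoped ENNReal Topology NNReal RealInnerProductSpace

noncomputable section

/-- Points of Lebesgue density `1` of a set in `ℝ^N`. -/
def densityOnePts {N : ℕ} (E : Set (EuclideanSpace ℝ (Fin N))) :
    Set (EuclideanSpace ℝ (Fin N)) :=
  {x | Tendsto (fun r : ℝ => volume (E ∩ ball x r) / volume (ball x r)) (𝓝[>] 0) (𝓝 1)}

/-- Points of Lebesgue density `0` of a set in `ℝ^N`. -/
def densityZeroPts {N : ℕ} (E : Set (EuclideanSpace ℝ (Fin N))) :
    Set (EuclideanSpace ℝ (Fin N)) :=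
  {x | Tendsto (fun r : ℝ => volume (E ∩ ball x r) / volume (ball x r)) (𝓝[>] 0) (𝓝 0)}

/-- The essential boundary `∂*E`: points of density neither `0` nor `1`. -/
def essBdry {N : ℕ} (E : Set (EuclideanSpace ℝ (Fin N))) :
    Set (EuclideanSpace ℝ (Fin N)) :=
  (densityOnePts E ∪ densityZeroPts E)ᶜ

/-- Relative perimeter of `E` in `Ω` (De Giorgi–Federer):
`P(E,Ω) = H^{N-1}(∂*E ∩ Ω)`. -/
def perim {N : ℕ} (E Ω : Set (EuclideanSpace ℝ (Fin N))) : ℝ≥0∞ :=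
  μH[(N : ℝ) - 1] (essBdry E ∩ Ω)

/-- Support of the Gauss–Green measure `μ_E`, whose total variation is
`H^{N-1} ⌊ ∂*E`. -/
def sptGG {N : ℕ} (E : Set (EuclideanSpace ℝ (Fin N))) :
    Set (EuclideanSpace ℝ (Fin N)) :=
  {x | ∀ r : ℝ, 0 < r → 0 < μH[(N : ℝ) - 1] (essBdry E ∩ ball x r)}

/-- The Lebesgue volume `ω_N` of the unit ball of `ℝ^N`. -/
def omegaVol (N : ℕ) : ℝ := (volume (ball (0 : EuclideanSpace ℝ (Fin N)) 1)).toReal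

/-- A domain of isoperimetry. -/
def IsDomainOfIsoperimetry {N : ℕ} (V : Set (EuclideanSpace ℝ (Fin N))) : Prop :=
  ∃ C : ℝ, 0 < C ∧ ∀ ω : Set (EuclideanSpace ℝ (Fin N)), IsOpen ω → ω ⊆ V →
    min (volume ω) (volume (V \ ω)) ≤
      ENNReal.ofReal C * μH[(N : ℝ) - 1] (frontier ω ∩ V) ^ ((N : ℝ) / ((N : ℝ) - 1))



theorem slice_metric {X : Type*} [MetricSpace X] [MeasurableSpace X] [BorelSpace X]
    (d : ℝ) (hd : 0 < d) (E : Set X) (x : X) {a b : ℝ} (hab : a < b) :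
    ∃ t ∈ Ioo a b, μH[d] (E ∩ sphere x t) ≤ 2 * μH[d + 1] E / ENNReal.ofReal (b - a) := by
  by_cases htop : μH[d + 1] E = ∞
  · refine ⟨(a + b) / 2, ⟨by linarith, by linarith⟩, ?_⟩
    rw [htop, ENNReal.mul_top (by norm_num), ENNReal.top_div_of_ne_top ENNReal.ofReal_ne_top]
    exact le_top
  have hcov : ∀ n : ℕ, ∃ t : ℕ → Set X, E ⊆ ⋃ j, t j ∧ (∀ j, ediam (t j) ≤ ((n : ℝ≥0∞) + 1)⁻¹) ∧
      ∑' j, ediam (t j) ^ (d + 1) ≤ μH[d + 1] E + ((n : ℝ≥0∞) + 1)⁻¹ := by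
    intro n
    have hpos : (0 : ℝ≥0∞) < ((n : ℝ≥0∞) + 1)⁻¹ := by
      rw [ENNReal.inv_pos]; exact ENNReal.add_ne_top.2 ⟨ENNReal.natCast_ne_top n, by simp⟩
    have hlt : (⨅ (t : ℕ → Set X) (_ : E ⊆ ⋃ n, t n) (_ : ∀ j, ediam (t j) ≤ ((n : ℝ≥0∞) + 1)⁻¹),
          ∑' n, ⨆ _ : (t n).Nonempty, ediam (t n) ^ (d + 1)) < μH[d + 1] E + ((n : ℝ≥0∞) + 1)⁻¹ := by
      refine lt_of_le_of_lt ?_ (ENNReal.lt_add_right htop hpos.ne')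
      rw [Measure.hausdorffMeasure_apply (d + 1) E]
      exact le_iSup₂ (f := fun (r : ℝ≥0∞) (_ : 0 < r) =>
        ⨅ (t : ℕ → Set X) (_ : E ⊆ ⋃ n, t n) (_ : ∀ n, ediam (t n) ≤ r),
          ∑' n, ⨆ _ : (t n).Nonempty, ediam (t n) ^ (d + 1)) _ hpos
    simp only [iInf_lt_iff] at hlt
    obtain ⟨t, h1, h2, h3⟩ := hlt
    refine ⟨t, h1, h2, le_trans (ENNReal.tsum_le_tsum fun j => ?_) h3.le⟩
    rcases (t j).eq_empty_or_nonempty with h | h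
    · simp [h, ENNReal.zero_rpow_of_pos (by linarith : 0 < d + 1)]
    · simp [h]
  choose t hE hdiam hsum using hcov
  classical
  let J : ℕ → ℕ → Set ℝ := fun n j =>
    if h : (t n j).Nonempty then closedEBall (dist h.some x) (ediam (t n j)) else ∅
  have hJm : ∀ n j, MeasurableSet (J n j) := by
    intro n j
    by_cases h : (t n j).Nonempty
    · simp only [J, h, dite_true]; exact isClosed_closedEBall.measurableSet
    · simp [J, h]
  have hJv : ∀ n j, volume (J n j) ≤ 2 * ediam (t n j) := by
    intro n j
    by_cases h : (t n j).Nonempty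
    · simp only [J, h, dite_true]; rw [Real.volume_closedEBall]
    · simp [J, h]
  have hJmem : ∀ n j, ∀ y ∈ t n j, dist y x ∈ J n j := by
    intro n j y hy
    have h : (t n j).Nonempty := ⟨y, hy⟩
    simp only [J, h, dite_true, mem_closedEBall]
    refine le_trans ?_ (edist_le_ediam_of_mem hy h.some_mem)
    have := (LipschitzWith.dist_left x) y h.some
    simpa using this
  let g : ℕ → ℝ → ℝ≥0∞ := fun n τ => ∑' j, (J n j).indicator (fun _ => ediam (t n j) ^ d) τ
  have hgm : ∀ n, Measurable (g n) := fun n =>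
    Measurable.tsum fun j => measurable_const.indicator (hJm n j)
  have hgint : ∀ n, ∫⁻ τ, g n τ ≤ 2 * (μH[d + 1] E + ((n : ℝ≥0∞) + 1)⁻¹) := by
    intro n
    calc ∫⁻ τ, g n τ = ∑' j, ∫⁻ τ, (J n j).indicator (fun _ => ediam (t n j) ^ d) τ :=
          lintegral_tsum fun j => (measurable_const.indicator (hJm n j)).aemeasurable
      _ ≤ ∑' j, 2 * ediam (t n j) ^ (d + 1) := by
          refine ENNReal.tsum_le_tsum fun j => ?_
          rw [lintegral_indicator_const (hJm n j), ENNReal.rpow_add_of_nonneg d 1 hd.le zero_le_one,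
            ENNReal.rpow_one]
          calc _ ≤ ediam (t n j) ^ d * (2 * ediam (t n j)) := by gcongr; exact hJv n j
            _ = _ := by ring
      _ = 2 * ∑' j, ediam (t n j) ^ (d + 1) := ENNReal.tsum_mul_left
      _ ≤ _ := by gcongr; exact hsum n
  have hinv : Tendsto (fun n : ℕ => ((n : ℝ≥0∞) + 1)⁻¹) atTop (𝓝 0) := by
    have := (tendsto_add_atTop_iff_nat 1).2 ENNReal.tendsto_inv_nat_nhds_zero
    simpa using this
  have hle : ∀ τ, μH[d] (E ∩ sphere x τ) ≤ liminf (fun n => g n τ) atTop := by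
    intro τ
    refine (Measure.hausdorffMeasure_le_liminf_tsum d (E ∩ sphere x τ) _ hinv
      (fun n j => t n j ∩ sphere x τ) (Eventually.of_forall fun n j =>
        (ediam_mono inter_subset_left).trans (hdiam n j)) (Eventually.of_forall fun n y hy => ?_)).trans ?_
    · obtain ⟨j, hj⟩ := mem_iUnion.1 (hE n hy.1)
      exact mem_iUnion.2 ⟨j, hj, hy.2⟩
    · refine liminf_le_liminf (Eventually.of_forall fun n => ENNReal.tsum_le_tsum fun j => ?_)
      rcases (t n j ∩ sphere x τ).eq_empty_or_nonempty with h | ⟨y, hy, hyS⟩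
      · simp [h, ENNReal.zero_rpow_of_pos hd]
      · have : τ ∈ J n j := by
          have := hJmem n j y hy
          rwa [mem_sphere.1 hyS] at this
        rw [indicator_of_mem this]
        exact ENNReal.rpow_le_rpow (ediam_mono inter_subset_left) hd.le
  have hint : ∫⁻ τ in Ioo a b, liminf (fun n => g n τ) atTop ≤ 2 * μH[d + 1] E := by
    calc _ ≤ ∫⁻ τ, liminf (fun n => g n τ) atTop := setLIntegral_le_lintegral _ _
      _ ≤ liminf (fun n => ∫⁻ τ, g n τ) atTop := lintegral_liminf_le hgm
      _ ≤ liminf (fun n : ℕ => 2 * (μH[d + 1] E + ((n : ℝ≥0∞) + 1)⁻¹)) atTop :=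
          liminf_le_liminf (Eventually.of_forall hgint)
      _ = 2 * (μH[d + 1] E + 0) := by
          refine Tendsto.liminf_eq (ENNReal.Tendsto.const_mul (tendsto_const_nhds.add hinv) (Or.inr (by norm_num)))
      _ = _ := by simp
  obtain ⟨τ, hτ, h⟩ := exists_le_setLAverage (μ := volume) (s := Ioo a b)
    (f := fun τ => liminf (fun n => g n τ) atTop) (by simp [hab]) (by simp)
    (Measurable.liminf hgm).aemeasurable
  refine ⟨τ, hτ, (hle τ).trans (h.trans ?_)⟩
  rw [setLAverage_eq, Real.volume_Ioo]
  gcongr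

theorem slice_euclid {N : ℕ} (hN : 2 ≤ N) : ∃ K : ℝ, 0 < K ∧
    ∀ (E : Set (EuclideanSpace ℝ (Fin N))) (x : EuclideanSpace ℝ (Fin N)) (a b : ℝ), a < b →
    ∃ t ∈ Ioo a b, μH[(N : ℝ) - 1] (E ∩ sphere x t) ≤ ENNReal.ofReal (K / (b - a)) * volume E := by
  have hN' : (2 : ℝ) ≤ N := by exact_mod_cast hN
  have hh : Measure.IsAddHaarMeasure (μH[(N : ℝ)] : Measure (EuclideanSpace ℝ (Fin N))) := by
    simpa using MeasureTheory.isAddHaarMeasure_hausdorffMeasure (E := EuclideanSpace ℝ (Fin N))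
  have h := Measure.isAddLeftInvariant_eq_smul (μH[(N : ℝ)] : Measure (EuclideanSpace ℝ (Fin N))) volume
  set k := Measure.addHaarScalarFactor (μH[(N : ℝ)] : Measure (EuclideanSpace ℝ (Fin N))) volume
  refine ⟨2 * (k + 1), by positivity, fun E x a b hab => ?_⟩
  obtain ⟨t, ht, hle⟩ := slice_metric ((N : ℝ) - 1) (by linarith) E x hab
  refine ⟨t, ht, hle.trans ?_⟩
  rw [sub_add_cancel, h, Measure.smul_apply, ENNReal.ofReal_div_of_pos (by linarith),
    ENNReal.ofReal_mul (by norm_num), ENNReal.div_eq_inv_mul, ENNReal.div_eq_inv_mul, mul_assoc, mul_assoc]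
  gcongr
  · simp
  · rw [ENNReal.smul_def, smul_eq_mul]
    gcongr
    rw [ENNReal.ofReal_add (by positivity) (by norm_num)]
    simp

theorem null_of_finite {N : ℕ} (E : Set (EuclideanSpace ℝ (Fin N)))
    (hE : μH[(N : ℝ) - 1] E ≠ ∞) : volume E = 0 := by
  have hh : Measure.IsAddHaarMeasure (μH[(N : ℝ)] : Measure (EuclideanSpace ℝ (Fin N))) := by
    simpa using MeasureTheory.isAddHaarMeasure_hausdorffMeasure (E := EuclideanSpace ℝ (Fin N))
  have h := Measure.isAddLeftInvariant_eq_smul (volume : Measure (EuclideanSpace ℝ (Fin N))) μH[(N : ℝ)]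
  rw [h, Measure.smul_apply]
  rcases Measure.hausdorffMeasure_zero_or_top (by linarith : (N : ℝ) - 1 < N) E with h | h
  · simp [h]
  · exact absurd h hE

theorem perim_le {N : ℕ} (E V : Set (EuclideanSpace ℝ (Fin N))) :
    perim E V ≤ μH[(N : ℝ) - 1] (frontier E ∩ V) := by
  refine measure_mono (inter_subset_inter_left _ ?_)
  intro y hy
  by_contra hf
  apply hy
  have hpos : ∀ r : ℝ, 0 < r → volume (ball y r) ≠ 0 := fun r hr => (measure_ball_pos _ _ hr).ne'
  by_cases h : y ∈ interior E
  · left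
    obtain ⟨ε, hε, hb⟩ := Metric.isOpen_iff.1 isOpen_interior y h
    refine Tendsto.congr' (f₁ := fun _ => 1) ?_ tendsto_const_nhds
    filter_upwards [Ioo_mem_nhdsGT hε] with r hr
    rw [inter_eq_right.2 (((ball_subset_ball hr.2.le).trans hb).trans interior_subset),
      ENNReal.div_self (hpos r hr.1) measure_ball_lt_top.ne]
  · right
    have : y ∈ (closure E)ᶜ := fun hc => hf ⟨hc, h⟩
    obtain ⟨ε, hε, hb⟩ := Metric.isOpen_iff.1 isClosed_closure.isOpen_compl y this
    refine Tendsto.congr' (f₁ := fun _ => 0) ?_ tendsto_const_nhds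
    filter_upwards [Ioo_mem_nhdsGT hε] with r hr
    have : E ∩ ball y r = ∅ := by
      ext z
      simp only [mem_inter_iff, mem_empty_iff_false, iff_false, not_and]
      exact fun hz hz' => hb (ball_subset_ball hr.2.le hz') (subset_closure hz)
    simp [this]

theorem half_ball {N : ℕ} {C : Set (EuclideanSpace ℝ (Fin N))} (hC : IsOpen C) (hconv : Convex ℝ C)
    {x : EuclideanSpace ℝ (Fin N)} (hx : x ∈ frontier C) (r : ℝ) :
    volume (ball x r) ≤ 2 * volume (ball x r \ closure C) := by
  have hxC : x ∉ C := by
    rw [hC.frontier_eq] at hx; exact hx.2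
  have h1 : volume (ball x r ∩ C) ≤ volume (ball x r \ closure C) := by
    have : (fun y => (x + x) - y) '' (ball x r ∩ C) ⊆ ball x r \ closure C := by
      rintro _ ⟨y, ⟨hy, hyC⟩, rfl⟩
      refine ⟨?_, fun hcl => hxC ?_⟩
      · rw [mem_ball, dist_eq_norm] at hy ⊢
        rw [← norm_neg]; rwa [show -(x + x - y - x) = y - x by abel]
      · have := hconv.combo_interior_closure_mem_interior (hC.interior_eq.symm ▸ hyC) hcl
          (by norm_num : (0 : ℝ) < 1 / 2) (by norm_num : (0 : ℝ) ≤ 1 / 2) (by norm_num)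
        rw [hC.interior_eq] at this
        convert this using 1
        module
    refine le_trans (le_of_eq ?_) (measure_mono this)
    have hp : MeasurePreserving (fun y : EuclideanSpace ℝ (Fin N) => (x + x) - y) volume volume :=
      Measure.measurePreserving_sub_left volume (x + x)
    have he : (fun y : EuclideanSpace ℝ (Fin N) => (x + x) - y) '' (ball x r ∩ C)
        = (fun y => (x + x) - y) ⁻¹' (ball x r ∩ C) := by
      exact congrFun (image_eq_preimage_of_inverse (fun z => by simp) (fun z => by simp)) _
    rw [he, hp.measure_preimage (isOpen_ball.inter hC).measurableSet.nullMeasurableSet]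
  calc volume (ball x r) ≤ volume ((ball x r ∩ C) ∪ frontier C ∪ (ball x r \ closure C)) := by
        apply measure_mono
        intro y hy
        by_cases h1 : y ∈ C
        · exact Or.inl (Or.inl ⟨hy, h1⟩)
        · by_cases h2 : y ∈ closure C
          · left; right; rw [hC.frontier_eq]; exact ⟨h2, h1⟩
          · exact Or.inr ⟨hy, h2⟩
    _ ≤ volume (ball x r ∩ C) + volume (frontier C) + volume (ball x r \ closure C) :=
        (measure_union_le _ _).trans (by gcongr; exact measure_union_le _ _)
    _ ≤ _ := by
        rw [hconv.addHaar_frontier volume, add_zero, two_mul]; gcongr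

theorem tsum_rpow_le' {ι : Type*} (a : ι → ℝ≥0∞) {p : ℝ} (hp : 1 ≤ p) :
    ∑' i, a i ^ p ≤ (∑' i, a i) ^ p := by
  have hs : ∀ z : ℝ≥0∞, z ^ p = z * z ^ (p - 1) := by
    intro z
    conv_lhs => rw [show p = 1 + (p - 1) by ring]
    rw [ENNReal.rpow_add_of_nonneg _ _ zero_le_one (by linarith), ENNReal.rpow_one]
  rw [hs (∑' i, a i), ← ENNReal.tsum_mul_right]
  refine ENNReal.tsum_le_tsum fun i => ?_
  rw [hs]
  gcongr <;> exact ENNReal.le_tsum i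

theorem omegaVol_pos {N : ℕ} : 0 < omegaVol N :=
  ENNReal.toReal_pos (measure_ball_pos _ _ one_pos).ne' measure_ball_lt_top.ne

theorem ball_vol {N : ℕ} (x : EuclideanSpace ℝ (Fin N)) {r : ℝ} (hr : 0 < r) :
    volume (ball x r) = ENNReal.ofReal (omegaVol N * r ^ (N : ℝ)) := by
  rw [Measure.addHaar_ball_of_pos _ _ hr, mul_comm, ENNReal.ofReal_mul omegaVol_pos.le, omegaVol,
    ENNReal.ofReal_toReal measure_ball_lt_top.ne, Real.rpow_natCast]
  simp

theorem exists_theta (c1 K w p M : ℝ) (hw : 0 < w) (hp : 1 < p) (hM : 0 < M) (hK : 0 < K) :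
    ∃ θ : ℝ, 0 < θ ∧ θ < w ∧ c1 * (K * θ) ^ p < θ / M := by
  have h1 : Tendsto (fun θ : ℝ => c1 * K ^ p * θ ^ (p - 1)) (𝓝[>] 0) (𝓝 0) := by
    have h : Tendsto (fun θ : ℝ => θ ^ (p - 1)) (𝓝 0) (𝓝 (0 ^ (p - 1))) :=
      (Real.continuous_rpow_const (by linarith)).tendsto 0
    rw [Real.zero_rpow (by linarith)] at h
    simpa using (h.const_mul (c1 * K ^ p)).mono_left nhdsWithin_le_nhds
  have h2 := h1.eventually (gt_mem_nhds (by positivity : 0 < 1 / M))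
  obtain ⟨θ, h3, h4⟩ := (h2.and (Ioo_mem_nhdsGT hw)).exists
  refine ⟨θ, h4.1, h4.2, ?_⟩
  rw [Real.mul_rpow hK.le h4.1.le]
  have : θ ^ p = θ ^ (p - 1) * θ := by
    conv_lhs => rw [show p = (p - 1) + 1 by ring]
    rw [Real.rpow_add h4.1, Real.rpow_one]
  rw [this]
  have := mul_lt_mul_of_pos_right h3 h4.1
  calc _ = c1 * K ^ p * θ ^ (p - 1) * θ := by ring
    _ < _ := this
    _ = _ := by ring

theorem iso_ball {N : ℕ} {c1 : ℝ} {A ω : Set (EuclideanSpace ℝ (Fin N))}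
    (hA : IsOpen A) (hω : IsOpen ω)
    (hiso : ∀ ω : Set (EuclideanSpace ℝ (Fin N)), IsOpen ω → ω ⊆ A →
      min (volume ω) (volume (A \ ω)) ≤
        ENNReal.ofReal c1 * μH[(N : ℝ) - 1] (frontier ω ∩ A) ^ ((N : ℝ) / ((N : ℝ) - 1)))
    (hp : 0 ≤ (N : ℝ) / ((N : ℝ) - 1))
    (hmaj : volume (A \ ω) ≤ volume (A ∩ ω)) (x : EuclideanSpace ℝ (Fin N)) (t : ℝ) :
    volume ((A \ ω) ∩ closedBall x t) ≤ ENNReal.ofReal c1 *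
      (μH[(N : ℝ) - 1] (frontier ω ∩ A ∩ closedBall x t) +
        μH[(N : ℝ) - 1] ((A \ ω) ∩ sphere x t)) ^ ((N : ℝ) / ((N : ℝ) - 1)) := by
  have hcl : IsOpen (closedBall x t)ᶜ := isClosed_closedBall.isOpen_compl
  have h := hiso ((ω ∪ (closedBall x t)ᶜ) ∩ A) ((hω.union hcl).inter hA) inter_subset_right
  have e1 : A \ ((ω ∪ (closedBall x t)ᶜ) ∩ A) = (A \ ω) ∩ closedBall x t := by
    ext y; simp only [Set.mem_sdiff, mem_inter_iff, mem_union, mem_compl_iff]; tauto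
  rw [e1, frontier_inter_open_inter hA, min_eq_right] at h
  · refine h.trans ?_
    gcongr
    refine (measure_mono ?_).trans (measure_union_le _ _)
    rintro y ⟨hy, hyA⟩
    rcases frontier_union_subset _ _ hy with ⟨h1, h2⟩ | ⟨h1, h2⟩
    · left
      rw [compl_compl, closure_closedBall] at h2
      exact ⟨⟨h1, hyA⟩, h2⟩
    · right
      rw [frontier_compl] at h2
      rw [hω.isClosed_compl.closure_eq] at h1
      exact ⟨⟨hyA, h1⟩, frontier_closedBall_subset_sphere h2⟩
  · calc _ ≤ volume (A \ ω) := measure_mono inter_subset_left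
      _ ≤ _ := hmaj
      _ ≤ volume ((ω ∪ (closedBall x t)ᶜ) ∩ A) := measure_mono fun y hy => ⟨Or.inl hy.2, hy.1⟩

theorem key {N : ℕ} (hN : 2 ≤ N) (c1 : ℝ) (hc1 : 0 < c1) : ∃ κ : ℝ, 0 < κ ∧
    ∀ A ω : Set (EuclideanSpace ℝ (Fin N)), IsOpen A → IsOpen ω →
    (∀ ω : Set (EuclideanSpace ℝ (Fin N)), IsOpen ω → ω ⊆ A →
      min (volume ω) (volume (A \ ω)) ≤
        ENNReal.ofReal c1 * μH[(N : ℝ) - 1] (frontier ω ∩ A) ^ ((N : ℝ) / ((N : ℝ) - 1))) →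
    volume A ≠ ∞ → volume (A \ ω) ≤ volume (A ∩ ω) →
    ∀ x : EuclideanSpace ℝ (Fin N), (∃ r0 > 0, ∀ r ∈ Ioo 0 r0,
      volume (ball x r) ≤ 2 * volume ((A \ ω) ∩ closedBall x r)) →
    ∃ r > 0, ENNReal.ofReal (κ * r ^ ((N : ℝ) - 1)) ≤
      μH[(N : ℝ) - 1] (frontier ω ∩ A ∩ closedBall x r) := by
  have hN' : (2 : ℝ) ≤ N := by exact_mod_cast hN
  obtain ⟨K, hK, hslice⟩ := slice_euclid hN
  have hp : 1 < (N : ℝ) / ((N : ℝ) - 1) := by rw [lt_div_iff₀] <;> linarith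
  set p := (N : ℝ) / ((N : ℝ) - 1) with hpdef
  have hw := @omegaVol_pos N
  obtain ⟨θ, hθ, hθw, hθc⟩ := exists_theta c1 (4 * K) (omegaVol N / 2) p (2 ^ (N : ℝ)) (by positivity)
    hp (by positivity) (by positivity)
  refine ⟨2 * K * θ, by positivity, fun A ω hA hω hiso hAfin hmaj x ⟨r0, hr0, hdens⟩ => ?_⟩
  by_contra! hcon
  set m : ℝ → ℝ≥0∞ := fun r => volume ((A \ ω) ∩ closedBall x r) with hm
  set ρ := r0 / 2 with hρ
  have hρ0 : 0 < ρ := by positivity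
  have hex : ∃ k : ℕ, m (2 ^ k * ρ) < ENNReal.ofReal (θ * (2 ^ k * ρ) ^ (N : ℝ)) := by
    have ht : Tendsto (fun k : ℕ => θ * ((2 : ℝ) ^ k * ρ) ^ (N : ℝ)) atTop atTop := by
      refine Tendsto.const_mul_atTop hθ ((tendsto_rpow_atTop (by linarith)).comp ?_)
      exact (tendsto_pow_atTop_atTop_of_one_lt (by norm_num)).atTop_mul_const hρ0
    obtain ⟨k, hk⟩ := (ht.eventually_gt_atTop (volume A).toReal).exists
    refine ⟨k, ?_⟩
    calc _ ≤ volume A := measure_mono (inter_subset_left.trans sdiff_subset)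
      _ < _ := by rwa [ENNReal.lt_ofReal_iff_toReal_lt hAfin]
  classical
  have hk := Nat.find_spec hex
  have hk' := fun j => Nat.find_min hex (m := j)
  set k := Nat.find hex
  rcases hk0 : k with _ | j
  · rw [hk0] at hk
    simp only [pow_zero, one_mul] at hk
    have h1 := hdens ρ ⟨hρ0, by simp [hρ]; linarith⟩
    rw [ball_vol x hρ0] at h1
    have h2 : ENNReal.ofReal (omegaVol N * ρ ^ (N : ℝ)) < ENNReal.ofReal (2 * (θ * ρ ^ (N : ℝ))) := by
      rw [ENNReal.ofReal_mul (by norm_num : (0:ℝ) ≤ 2)]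
      refine h1.trans_lt ?_
      rw [ENNReal.ofReal_ofNat]
      exact ENNReal.mul_lt_mul_right (by norm_num) (by norm_num) hk
    have h3 := (ENNReal.ofReal_lt_ofReal_iff (by positivity)).1 h2
    have h4 : 0 < ρ ^ (N : ℝ) := by positivity
    nlinarith
  · have h1 := hk' j (by omega)
    rw [hk0] at hk
    set r := (2 : ℝ) ^ (j + 1) * ρ with hr
    have hr0 : 0 < r := by positivity
    have hrh : (2 : ℝ) ^ j * ρ = r / 2 := by rw [hr]; ring
    rw [hrh, not_lt] at h1
    obtain ⟨t, ht, hst⟩ := hslice ((A \ ω) ∩ closedBall x r) x (r / 2) r (by linarith)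
    have hrd : r ^ (N : ℝ) = r ^ ((N : ℝ) - 1) * r := by
      conv_lhs => rw [show (N : ℝ) = ((N : ℝ) - 1) + 1 by ring]
      rw [Real.rpow_add hr0, Real.rpow_one]
    have hst' : μH[(N : ℝ) - 1] ((A \ ω) ∩ sphere x t)
        ≤ ENNReal.ofReal (2 * K * θ * r ^ ((N : ℝ) - 1)) := by
      calc _ ≤ μH[(N : ℝ) - 1] ((A \ ω) ∩ closedBall x r ∩ sphere x t) := by
            refine measure_mono fun y hy => ⟨⟨hy.1, ?_⟩, hy.2⟩
            rw [mem_closedBall, mem_sphere.1 hy.2]; exact ht.2.le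
        _ ≤ _ := hst
        _ ≤ ENNReal.ofReal (K / (r - r / 2)) * ENNReal.ofReal (θ * r ^ (N : ℝ)) := by
            gcongr
        _ = _ := by
            rw [← ENNReal.ofReal_mul (div_nonneg hK.le (by linarith)), hrd]
            congr 1
            field_simp
            ring
    have hPt : μH[(N : ℝ) - 1] (frontier ω ∩ A ∩ closedBall x t)
        ≤ ENNReal.ofReal (2 * K * θ * r ^ ((N : ℝ) - 1)) :=
      (measure_mono (inter_subset_inter_right _ (closedBall_subset_closedBall ht.2.le))).trans
        (hcon r hr0).le
    have h2 : ENNReal.ofReal (θ * (r / 2) ^ (N : ℝ)) ≤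
        ENNReal.ofReal (c1 * (4 * K * θ) ^ p * r ^ (N : ℝ)) := by
      calc _ ≤ m (r / 2) := h1
        _ ≤ m t := measure_mono (inter_subset_inter_right _ (closedBall_subset_closedBall ht.1.le))
        _ ≤ _ := iso_ball hA hω hiso (by rw [← hpdef]; linarith) hmaj x t
        _ ≤ ENNReal.ofReal c1 * (ENNReal.ofReal (2 * K * θ * r ^ ((N : ℝ) - 1)) +
              ENNReal.ofReal (2 * K * θ * r ^ ((N : ℝ) - 1))) ^ p := by gcongr
        _ = ENNReal.ofReal (c1 * (4 * K * θ) ^ p * r ^ (N : ℝ)) := by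
            rw [← ENNReal.ofReal_add (by positivity) (by positivity),
              ENNReal.ofReal_rpow_of_nonneg (by positivity) (by linarith),
              ← ENNReal.ofReal_mul hc1.le]
            congr 1
            rw [show 2 * K * θ * r ^ ((N : ℝ) - 1) + 2 * K * θ * r ^ ((N : ℝ) - 1) =
              (4 * K * θ) * r ^ ((N : ℝ) - 1) by ring, Real.mul_rpow (by positivity) (by positivity),
              ← Real.rpow_mul hr0.le, hpdef, mul_div_cancel₀ _ (by linarith : (N : ℝ) - 1 ≠ 0)]
            ring
    rw [ENNReal.ofReal_le_ofReal_iff (by positivity), Real.div_rpow hr0.le (by norm_num)] at h2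
    have h3 := mul_lt_mul_of_pos_right hθc (by positivity : 0 < r ^ (N : ℝ))
    have h4 : θ * (r ^ (N : ℝ) / 2 ^ (N : ℝ)) = θ / 2 ^ (N : ℝ) * r ^ (N : ℝ) := by ring
    linarith

theorem frontier_cover {X : Type*} [MetricSpace X] {C Om ω : Set X} {u : Set X} {t : X → ℝ}
    (hC : IsOpen C) (hOm : IsOpen Om) (hω : IsOpen ω)
    (hu : u ⊆ frontier C)
    (hfin : ∀ δ > 0, {b ∈ u | δ ≤ t b}.Finite)
    (hcov : ∀ x ∈ (frontier C ∩ Om) \ closure ω, x ∈ ⋃ b ∈ u, ball b (t b)) :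
    frontier (ω ∪ (Om \ closure C) ∪ ((⋃ b ∈ u, ball b (t b)) ∩ Om)) ∩ Om ⊆
      (frontier ω ∩ Om) ∪ ⋃ b ∈ u, sphere b (t b) := by
  rintro y ⟨⟨hycl, hyint⟩, hyOm⟩
  have hBo : IsOpen (⋃ b ∈ u, ball b (t b)) := isOpen_biUnion fun b _ => isOpen_ball
  rw [((hω.union (hOm.sdiff isClosed_closure)).union (hBo.inter hOm)).interior_eq] at hyint
  by_cases hyω : y ∈ closure ω
  · left
    refine ⟨?_, hyOm⟩
    rw [hω.frontier_eq]
    exact ⟨hyω, fun h => hyint (Or.inl (Or.inl h))⟩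
  right
  have hyB : y ∉ ⋃ b ∈ u, ball b (t b) := fun h => hyint (Or.inr ⟨h, hyOm⟩)
  have hyF : y ∉ frontier C := fun h => hyB (hcov y ⟨⟨h, hyOm⟩, hyω⟩)
  have hyC : y ∈ C := by
    by_contra h
    by_cases h2 : y ∈ closure C
    · exact hyF (by rw [hC.frontier_eq]; exact ⟨h2, h⟩)
    · exact hyint (Or.inl (Or.inr ⟨hyOm, h2⟩))
  have hyA : y ∉ closure (Om \ closure C) := by
    intro h
    obtain ⟨z, hz1, hz2⟩ := mem_closure_iff.1 h C hC hyC
    exact hz2.2 (subset_closure hz1)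
  rw [closure_union, closure_union] at hycl
  have hycB : y ∈ closure (⋃ b ∈ u, ball b (t b)) := by
    rcases hycl with (h | h) | h
    · exact absurd h hyω
    · exact absurd h hyA
    · exact closure_mono inter_subset_left h
  obtain ⟨ε, hε, hb⟩ := Metric.isOpen_iff.1 (isClosed_frontier (s := C)).isOpen_compl y hyF
  have hy2 : y ∈ closure (⋃ b ∈ {b ∈ u | ε / 2 ≤ t b}, ball b (t b)) := by
    rw [Metric.mem_closure_iff] at hycB ⊢
    intro η hη
    obtain ⟨z, hz, hzd⟩ := hycB (min η (ε / 2)) (by positivity)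
    obtain ⟨b, hbu, hzb⟩ := mem_iUnion₂.1 hz
    refine ⟨z, mem_iUnion₂.2 ⟨b, ⟨hbu, ?_⟩, hzb⟩, hzd.trans_le (min_le_left _ _)⟩
    by_contra! hlt
    have h1 : dist y z < ε / 2 := hzd.trans_le (min_le_right _ _)
    have h2 : dist z b < t b := hzb
    refine hb (a := b) ?_ (hu hbu)
    rw [mem_ball, dist_comm]
    linarith [dist_triangle y z b]
  rw [(hfin (ε / 2) (by positivity)).closure_biUnion] at hy2
  obtain ⟨b, hbu, hyb⟩ := mem_iUnion₂.1 hy2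
  refine mem_iUnion₂.2 ⟨b, hbu.1, ?_⟩
  refine le_antisymm (closure_ball_subset_closedBall hyb) (not_lt.1 fun h => hyB ?_)
  exact mem_iUnion₂.2 ⟨b, hbu.1, h⟩

theorem main1 {N : ℕ} (hN : 2 ≤ N) (C Om : Set (EuclideanSpace ℝ (Fin N)))
    (hC : IsOpen C) (hCconv : Convex ℝ C) (hOm : IsOpen Om) (hOmfin : volume Om ≠ ∞)
    (hAplus : IsDomainOfIsoperimetry (Om \ closure C))
    (c : ℝ) (hc : 0 < c)
    (hiso : ∀ ωt : Set (EuclideanSpace ℝ (Fin N)), IsOpen ωt → ωt ⊆ Om →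
      ωt \ closure C = Om \ closure C →
      volume (Om \ ωt) ≤ ENNReal.ofReal c * perim ωt Om ^ ((N : ℝ) / ((N : ℝ) - 1))) :
    ∃ K' : ℝ, 0 < K' ∧ ∀ ω : Set (EuclideanSpace ℝ (Fin N)), IsOpen ω → ω ⊆ Om →
      volume ((Om \ closure C) \ ω) ≤ volume ((Om \ closure C) ∩ ω) →
      volume (Om \ ω) ≤
        ENNReal.ofReal K' * μH[(N : ℝ) - 1] (frontier ω ∩ Om) ^ ((N : ℝ) / ((N : ℝ) - 1)) := by
  have hN' : (2 : ℝ) ≤ N := by exact_mod_cast hN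
  obtain ⟨c1, hc1, hA⟩ := hAplus
  set A := Om \ closure C with hAdef
  have hAo : IsOpen A := hOm.sdiff isClosed_closure
  obtain ⟨κ, hκ, hkey⟩ := key hN c1 hc1
  obtain ⟨K, hK, hslice⟩ := slice_euclid hN
  have hp : 1 < (N : ℝ) / ((N : ℝ) - 1) := by rw [lt_div_iff₀] <;> linarith
  set p := (N : ℝ) / ((N : ℝ) - 1) with hpdef
  set d := (N : ℝ) - 1 with hd
  have hd1 : 1 ≤ d := by rw [hd]; linarith
  have hw := @omegaVol_pos N
  set w := omegaVol N
  set K4 := w * 10 ^ (N : ℝ) with hK4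
  set K3 := K * K4 / 5 with hK3
  have hK4pos : 0 < K4 := by positivity
  have hK3pos : 0 < K3 := by positivity
  refine ⟨c1 + (c * (1 + K3 * κ⁻¹) ^ p + K4 * κ⁻¹ ^ p), by positivity, fun ω hω hωOm hmaj => ?_⟩
  set P := μH[d] (frontier ω ∩ Om) with hP
  by_cases hPtop : P = ∞
  · rw [hPtop, ENNReal.top_rpow_of_pos (by linarith), ENNReal.mul_top]
    · exact le_top
    · rw [ne_eq, ENNReal.ofReal_eq_zero, not_le]; positivity
  set S := (frontier C ∩ Om) \ closure ω with hS
  have hex : ∀ x ∈ S, ∃ r > 0, ENNReal.ofReal (κ * r ^ d) ≤ μH[d] (frontier ω ∩ A ∩ closedBall x r) := by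
    intro x hx
    refine hkey A ω hAo hω hA (measure_ne_top_of_subset sdiff_subset hOmfin) hmaj x ?_
    obtain ⟨r0, hr0, hb⟩ := Metric.isOpen_iff.1 (hOm.sdiff (isClosed_closure (s := ω))) x ⟨hx.1.2, hx.2⟩
    refine ⟨r0, hr0, fun r hr => (half_ball hC hCconv hx.1.1 r).trans ?_⟩
    gcongr
    rintro y ⟨hy, hyC⟩
    have := hb (ball_subset_ball hr.2.le hy)
    exact ⟨⟨⟨this.1, hyC⟩, fun h => this.2 (subset_closure h)⟩, ball_subset_closedBall hy⟩
  choose! r hr0 hr using hex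
  have hrP : ∀ x ∈ S, ENNReal.ofReal (κ * r x ^ d) ≤ P := fun x hx =>
    (hr x hx).trans (measure_mono fun y hy => ⟨hy.1.1, hy.1.2.1⟩)
  have hrR : ∀ x ∈ S, r x ≤ max 1 (P.toReal / κ) := by
    intro x hx
    rcases le_total (r x) 1 with h | h
    · exact h.trans (le_max_left _ _)
    · refine le_trans ?_ (le_max_right _ _)
      have h1 := (ENNReal.ofReal_le_iff_le_toReal hPtop).1 (hrP x hx)
      have h2 : r x ≤ r x ^ d := by
        conv_lhs => rw [← Real.rpow_one (r x)]
        exact Real.rpow_le_rpow_of_exponent_le h hd1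
      rw [le_div_iff₀ hκ]
      nlinarith
  obtain ⟨u, huS, hudisj, hucov⟩ := Vitali.exists_disjoint_subfamily_covering_enlargement_closedBall
    S (fun x => x) r _ hrR 5 (by norm_num)
  have hucount : u.Countable := hudisj.countable_of_nonempty_interior fun a ha =>
    ⟨a, ball_subset_interior_closedBall (mem_ball_self (hr0 a (huS ha)))⟩
  have : Countable u := hucount.to_subtype
  have hsum0 : ∑' b : u, ENNReal.ofReal (κ * r b ^ d) ≤ P := by
    calc _ ≤ ∑' b : u, μH[d] (frontier ω ∩ A ∩ closedBall (b : EuclideanSpace ℝ (Fin N)) (r b)) :=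
          ENNReal.tsum_le_tsum fun b => hr b (huS b.2)
      _ ≤ μH[d] (⋃ b : u, frontier ω ∩ A ∩ closedBall (b : EuclideanSpace ℝ (Fin N)) (r b)) := by
          refine tsum_meas_le_meas_iUnion_of_disjoint _ (fun b =>
            (isClosed_frontier.measurableSet.inter hAo.measurableSet).inter measurableSet_closedBall) ?_
          intro a b hab
          exact (hudisj a.2 b.2 (fun h => hab (Subtype.ext h))).mono inter_subset_right inter_subset_right
      _ ≤ P := measure_mono (iUnion_subset fun b y hy => ⟨hy.1.1, hy.1.2.1⟩)
  have hsum : ∑' b : u, ENNReal.ofReal (r b ^ d) ≤ ENNReal.ofReal κ⁻¹ * P := by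
    calc _ = ∑' b : u, ENNReal.ofReal κ⁻¹ * ENNReal.ofReal (κ * r b ^ d) := by
          refine tsum_congr fun b => ?_
          rw [← ENNReal.ofReal_mul (by positivity)]
          congr 1
          field_simp
      _ = ENNReal.ofReal κ⁻¹ * ∑' b : u, ENNReal.ofReal (κ * r b ^ d) := ENNReal.tsum_mul_left
      _ ≤ _ := by gcongr
  have hrN : ∀ b ∈ u, r b ^ (N : ℝ) = r b ^ d * r b := by
    intro b hb
    conv_lhs => rw [show (N : ℝ) = d + 1 by rw [hd]; ring]
    rw [Real.rpow_add (hr0 b (huS hb)), Real.rpow_one]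
  have hball : ∀ b ∈ u, volume (ball b (10 * r b)) = ENNReal.ofReal (K4 * r b ^ (N : ℝ)) := by
    intro b hb
    have hb0 := hr0 b (huS hb)
    rw [ball_vol b (by positivity), Real.mul_rpow (by norm_num) hb0.le, hK4, mul_assoc]
  have hext : ∀ b ∈ u, ∃ t ∈ Ioo (5 * r b) (10 * r b),
      μH[d] (sphere b t) ≤ ENNReal.ofReal (K3 * r b ^ d) := by
    intro b hb
    have hb0 := hr0 b (huS hb)
    obtain ⟨t, ht, hle⟩ := hslice (ball b (10 * r b)) b (5 * r b) (10 * r b) (by linarith)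
    refine ⟨t, ht, ?_⟩
    rw [inter_eq_right.2 (sphere_subset_ball ht.2), hball b hb, ← ENNReal.ofReal_mul
      (div_nonneg hK.le (by linarith))] at hle
    refine hle.trans (le_of_eq ?_)
    rw [hrN b hb, hK3]
    congr 1
    field_simp
    ring
  choose! t ht hts using hext
  set B := ⋃ b ∈ u, ball b (t b) with hB
  have hcov : ∀ x ∈ S, x ∈ B := by
    intro x hx
    obtain ⟨b, hb, hsub⟩ := hucov x hx
    refine mem_iUnion₂.2 ⟨b, hb, ?_⟩
    exact closedBall_subset_ball (ht b hb).1 (hsub (mem_closedBall_self (hr0 x hx).le))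
  have hBo : IsOpen B := isOpen_biUnion fun b _ => isOpen_ball
  have hfin : ∀ δ > 0, {b ∈ u | δ ≤ t b}.Finite := by
    intro δ hδ
    have hne : ∑' b : u, ENNReal.ofReal (r b ^ d) ≠ ∞ :=
      ne_top_of_le_ne_top (ENNReal.mul_ne_top ENNReal.ofReal_ne_top hPtop) hsum
    have := ENNReal.finite_const_le_of_tsum_ne_top hne (ε := ENNReal.ofReal ((δ / 10) ^ d))
      (by rw [ne_eq, ENNReal.ofReal_eq_zero, not_le]; positivity)
    refine (this.image Subtype.val).subset ?_
    rintro b ⟨hb, hδb⟩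
    refine ⟨⟨b, hb⟩, ?_, rfl⟩
    apply ENNReal.ofReal_le_ofReal
    have := (ht b hb).2
    gcongr
    simp only
    linarith
  set ωt := ω ∪ A ∪ (B ∩ Om) with hωt
  have hωtOm : ωt ⊆ Om := union_subset (union_subset hωOm sdiff_subset) inter_subset_right
  have hfr := frontier_cover hC hOm hω (fun b hb => (huS hb).1.1) hfin hcov
  have hper : perim ωt Om ≤ ENNReal.ofReal (1 + K3 * κ⁻¹) * P := by
    calc perim ωt Om ≤ μH[d] (frontier ωt ∩ Om) := perim_le _ _
      _ ≤ μH[d] ((frontier ω ∩ Om) ∪ ⋃ b ∈ u, sphere b (t b)) := measure_mono hfr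
      _ ≤ P + μH[d] (⋃ b ∈ u, sphere b (t b)) := measure_union_le _ _
      _ ≤ P + ∑' b : u, μH[d] (sphere (b : EuclideanSpace ℝ (Fin N)) (t b)) := by
          gcongr; exact measure_biUnion_le _ hucount _
      _ ≤ P + ∑' b : u, ENNReal.ofReal K3 * ENNReal.ofReal (r b ^ d) := by
          gcongr with b
          rw [← ENNReal.ofReal_mul hK3pos.le]; exact hts b b.2
      _ ≤ P + ENNReal.ofReal K3 * (ENNReal.ofReal κ⁻¹ * P) := by
          rw [ENNReal.tsum_mul_left]; gcongr
      _ = _ := by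
          rw [ENNReal.ofReal_add (by norm_num) (by positivity), ENNReal.ofReal_mul hK3pos.le,
            ENNReal.ofReal_one]
          ring
  have hvB : volume B ≤ ENNReal.ofReal (K4 * κ⁻¹ ^ p) * P ^ p := by
    calc volume B ≤ ∑' b : u, volume (ball (b : EuclideanSpace ℝ (Fin N)) (t b)) :=
          measure_biUnion_le _ hucount _
      _ ≤ ∑' b : u, ENNReal.ofReal K4 * ENNReal.ofReal (r b ^ d) ^ p := by
          gcongr with b
          refine (measure_mono (ball_subset_ball (ht b b.2).2.le)).trans (le_of_eq ?_)
          have hb0 := hr0 b (huS b.2)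
          rw [hball b b.2, ENNReal.ofReal_mul hK4pos.le, ENNReal.ofReal_rpow_of_nonneg (by positivity)
            (by linarith), ← Real.rpow_mul hb0.le, hpdef, mul_div_cancel₀ _ (by linarith : d ≠ 0)]
      _ ≤ ENNReal.ofReal K4 * (ENNReal.ofReal κ⁻¹ * P) ^ p := by
          rw [ENNReal.tsum_mul_left]
          gcongr
          exact (tsum_rpow_le' _ hp.le).trans (ENNReal.rpow_le_rpow hsum (by linarith))
      _ = _ := by
          rw [ENNReal.mul_rpow_of_nonneg _ _ (by linarith), ENNReal.ofReal_mul hK4pos.le,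
            ENNReal.ofReal_rpow_of_nonneg (by positivity) (by linarith), mul_assoc]
  have hvA : volume (A \ ω) ≤ ENNReal.ofReal c1 * P ^ p := by
    have h := hA (ω ∩ A) (hω.inter hAo) inter_subset_right
    rw [frontier_inter_open_inter hAo, show A \ (ω ∩ A) = A \ ω by ext y; simp only [Set.mem_sdiff, mem_inter_iff]; tauto, min_eq_right (by rwa [inter_comm ω A])] at h
    refine h.trans ?_
    gcongr
    exact measure_mono (inter_subset_inter_right _ sdiff_subset)
  have hvt : volume (Om \ ωt) ≤ ENNReal.ofReal (c * (1 + K3 * κ⁻¹) ^ p) * P ^ p := by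
    refine (hiso ωt ((hω.union hAo).union (hBo.inter hOm)) hωtOm ?_).trans ?_
    · apply Subset.antisymm
      · exact sdiff_subset_sdiff_left hωtOm
      · exact fun y hy => ⟨Or.inl (Or.inr hy), hy.2⟩
    · rw [ENNReal.ofReal_mul hc.le, mul_assoc]
      gcongr
      refine (ENNReal.rpow_le_rpow hper (by linarith)).trans (le_of_eq ?_)
      rw [ENNReal.mul_rpow_of_nonneg _ _ (by linarith),
        ENNReal.ofReal_rpow_of_nonneg (by positivity) (by linarith)]
  calc volume (Om \ ω) ≤ volume ((A \ ω) ∪ ((Om \ ωt) ∪ B)) := by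
        apply measure_mono
        rintro y ⟨hy, hyω⟩
        by_cases h1 : y ∈ A
        · exact Or.inl ⟨h1, hyω⟩
        · by_cases h2 : y ∈ B
          · exact Or.inr (Or.inr h2)
          · refine Or.inr (Or.inl ⟨hy, ?_⟩)
            rintro ((h | h) | h)
            exacts [hyω h, h1 h, h2 h.1]
    _ ≤ volume (A \ ω) + (volume (Om \ ωt) + volume B) :=
        (measure_union_le _ _).trans (by gcongr; exact measure_union_le _ _)
    _ ≤ ENNReal.ofReal c1 * P ^ p + (ENNReal.ofReal (c * (1 + K3 * κ⁻¹) ^ p) * P ^ p +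
          ENNReal.ofReal (K4 * κ⁻¹ ^ p) * P ^ p) := by gcongr
    _ = _ := by
        rw [ENNReal.ofReal_add (by positivity) (by positivity),
          ENNReal.ofReal_add (by positivity) (by positivity)]
        ring
theorem stmt_14 {N : ℕ} (hN : 2 ≤ N) (D C E0 Om : Set (EuclideanSpace ℝ (Fin N)))
    (hD : IsOpen D) (hDb : IsBounded D) (hC : IsOpen C) (hCconv : Convex ℝ C) (hCD : C ⊆ D)
    (hOmopen : IsOpen Om) (hOmD : Om ⊆ D) (hbc : Om \ closure C = E0 \ closure C)
    (hAplus : IsDomainOfIsoperimetry (E0 \ closure C))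
    (c : ℝ) (hc : 0 < c)
    (hiso : ∀ ωt : Set (EuclideanSpace ℝ (Fin N)), IsOpen ωt → ωt ⊆ Om →
      ωt \ closure C = E0 \ closure C →
      volume (Om \ ωt) ≤ ENNReal.ofReal c * perim ωt Om ^ ((N : ℝ) / ((N : ℝ) - 1))) :
    IsDomainOfIsoperimetry Om := by

  have hN' : (2 : ℝ) ≤ N := by exact_mod_cast hN
  rw [← hbc] at hAplus
  simp only [← hbc] at hiso
  have hOmfin : volume Om ≠ ∞ := (hDb.subset hOmD).measure_lt_top.ne
  obtain ⟨K, hK, hmain⟩ := main1 hN C Om hC hCconv hOmopen hOmfin hAplus c hc hiso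
  have hp : 1 < (N : ℝ) / ((N : ℝ) - 1) := by rw [lt_div_iff₀] <;> linarith
  refine ⟨K, hK, fun ω hω hωOm => ?_⟩
  rcases le_total (volume ((Om \ closure C) \ ω)) (volume ((Om \ closure C) ∩ ω)) with h | h
  · exact (min_le_right _ _).trans (hmain ω hω hωOm h)
  · refine (min_le_left _ _).trans ?_
    by_cases hPtop : μH[(N : ℝ) - 1] (frontier ω ∩ Om) = ∞
    · rw [hPtop, ENNReal.top_rpow_of_pos (by linarith), ENNReal.mul_top]
      · exact le_top
      · rw [ne_eq, ENNReal.ofReal_eq_zero, not_le]; exact hK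
    have hnull := null_of_finite _ hPtop
    have hfr : ∀ y ∈ closure ω, y ∉ ω → y ∈ frontier ω := fun y h1 h2 => by
      rw [hω.frontier_eq]; exact ⟨h1, h2⟩
    have h2 := hmain (Om \ closure ω) (hOmopen.sdiff isClosed_closure) sdiff_subset ?_
    · calc volume ω ≤ volume (Om \ (Om \ closure ω)) :=
            measure_mono fun y hy => ⟨hωOm hy, fun h' => h'.2 (subset_closure hy)⟩
        _ ≤ _ := h2
        _ ≤ _ := by
            gcongr 2
            apply measure_mono
            have : Om \ closure ω = (closure ω)ᶜ ∩ Om := by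
              ext y; simp only [Set.mem_sdiff, mem_inter_iff, mem_compl_iff]; tauto
            rw [this, frontier_inter_open_inter hOmopen, frontier_compl]
            exact inter_subset_inter_left _ frontier_closure_subset
    · calc _ ≤ volume (((Om \ closure C) ∩ ω) ∪ (frontier ω ∩ Om)) := by
            apply measure_mono
            rintro y ⟨hy, hy2⟩
            by_cases hyω : y ∈ ω
            · exact Or.inl ⟨hy, hyω⟩
            · refine Or.inr ⟨hfr y ?_ hyω, hy.1⟩
              by_contra h'
              exact hy2 ⟨hy.1, h'⟩
        _ ≤ volume ((Om \ closure C) ∩ ω) + 0 := hnull ▸ measure_union_le _ _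
        _ ≤ volume ((Om \ closure C) \ ω) + 0 := by gcongr
        _ ≤ volume ((((Om \ closure C) ∩ (Om \ closure ω))) ∪ (frontier ω ∩ Om)) := by
            rw [add_zero]
            apply measure_mono
            rintro y ⟨hy, hy2⟩
            by_cases hyω : y ∈ closure ω
            · exact Or.inr ⟨hfr y hyω hy2, hy.1⟩
            · exact Or.inl ⟨hy, hy.1, hyω⟩
        _ ≤ volume ((Om \ closure C) ∩ (Om \ closure ω)) + 0 := hnull ▸ measure_union_le _ _
        _ = _ := add_zero _

end
end

section
/- Let $\phi: G \to F$ be a bi-Lipschitz bijection between subsets of $\mathbb{R}^N$ (with $\phi$ and $\phi^{-1}$ both Lipschitz) and let $A \subset\subset G$ be a set of finite perimeter. Then $\partial^*\phi(A) = \phi(\partial^* A)$, i.e., bi-Lipschitz maps carry the essential boundary to the essential boundary. -/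
open MeasureTheory Metric Filter Set Bornology
open scoped ENNReal Topology NNReal RealInnerProductSpace

noncomputable section

theorem vol_lip_image {N : ℕ} {K : ℝ≥0} {f : EuclideanSpace ℝ (Fin N) → EuclideanSpace ℝ (Fin N)}
    {s : Set (EuclideanSpace ℝ (Fin N))} (hf : LipschitzOnWith K f s) :
    volume (f '' s) ≤ (K : ℝ≥0∞) ^ N * volume s := by
  have h := hf.hausdorffMeasure_image_le (d := (N : ℝ)) (by positivity)
  have hv : (volume : Measure (EuclideanSpace ℝ (Fin N))) = μHE[N] := by
    have := EuclideanSpace.euclideanHausdorffMeasure_eq_volume N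
    exact this.symm
  rw [hv, Measure.euclideanHausdorffMeasure_def]
  simp only [Measure.smul_apply]
  calc _ ≤ _ • ((K : ℝ≥0∞) ^ (N : ℝ) * μH[(N : ℝ)] s) := by gcongr
    _ = _ := by
      rw [ENNReal.rpow_natCast, mul_smul_comm]

theorem interp_weights {N : ℕ} (ε : ℝ) (hε : 0 < ε) :
    ∃ (w t : ℕ → ℝ), (∀ i ∈ Finset.range (N + 1), 0 < t i ∧ t i ≤ ε) ∧
      (∑ i ∈ Finset.range (N + 1), w i = 1) ∧
      ∀ M : EuclideanSpace ℝ (Fin N) →L[ℝ] EuclideanSpace ℝ (Fin N),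
        (1 + M).det = ∑ i ∈ Finset.range (N + 1), w i * (1 + t i • M).det := by
  classical
  set t : ℕ → ℝ := fun i => ε / (i + 1) with ht
  have hinj : Set.InjOn t (Finset.range (N + 1)) := by
    intro a _ b _ hab
    simp only [ht] at hab
    have ha : (0 : ℝ) < (a : ℝ) + 1 := by positivity
    have hb : (0 : ℝ) < (b : ℝ) + 1 := by positivity
    field_simp at hab
    have : (a : ℝ) = b := by linarith
    exact_mod_cast this
  have key : ∀ p : Polynomial ℝ, p.natDegree ≤ N →
      p.eval 1 = ∑ i ∈ Finset.range (N + 1),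
        (Lagrange.basis (Finset.range (N + 1)) t i).eval 1 * p.eval (t i) := by
    intro p hp
    have h1 := Lagrange.eq_interpolate (f := p) hinj (by
      rw [Finset.card_range]
      exact lt_of_le_of_lt (Polynomial.degree_le_of_natDegree_le hp) (by exact_mod_cast Nat.lt_succ_self N))
    conv_lhs => rw [h1]
    rw [Lagrange.interpolate_apply, Polynomial.eval_finsetSum]
    refine Finset.sum_congr rfl fun i _ => ?_
    rw [Polynomial.eval_mul, Polynomial.eval_C, mul_comm]
  refine ⟨fun i => (Lagrange.basis (Finset.range (N + 1)) t i).eval 1, t, ?_, ?_, ?_⟩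
  · intro i _
    refine ⟨by positivity, ?_⟩
    apply div_le_self hε.le
    have : (0 : ℝ) ≤ i := by positivity
    linarith
  · have := key 1 (by simp)
    simpa using this.symm
  · intro M
    set b := (EuclideanSpace.basisFun (Fin N) ℝ).toBasis
    set A := LinearMap.toMatrix b b (M : EuclideanSpace ℝ (Fin N) →ₗ[ℝ] EuclideanSpace ℝ (Fin N))
    have hdet : ∀ s : ℝ, (1 + s • M).det =
        (Matrix.det ((Polynomial.X : Polynomial ℝ) • A.map Polynomial.C +
          (1 : Matrix (Fin N) (Fin N) ℝ).map Polynomial.C)).eval s := by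
      intro s
      rw [ContinuousLinearMap.det, ← LinearMap.det_toMatrix b, ← Polynomial.coe_evalRingHom,
        RingHom.map_det]
      congr 1
      ext i j
      simp [A, LinearMap.toMatrix_apply, Matrix.one_apply, b]
      split_ifs <;> simp [add_comm, mul_comm]
    have h1 := hdet 1
    rw [one_smul] at h1
    rw [h1, key _ ((Polynomial.natDegree_det_X_add_C_le _ _).trans (by simp))]
    exact Finset.sum_congr rfl fun i _ => by rw [hdet]

theorem det_pos_near {N : ℕ} : ∃ ε > 0, ∀ M : EuclideanSpace ℝ (Fin N) →L[ℝ] EuclideanSpace ℝ (Fin N),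
    ‖M‖ < ε → 0 < (1 + M).det := by
  have hc : Continuous fun M : EuclideanSpace ℝ (Fin N) →L[ℝ] EuclideanSpace ℝ (Fin N) =>
    (1 + M).det := ContinuousLinearMap.continuous_det.comp (continuous_const.add continuous_id)
  have h0 : (1 + (0 : EuclideanSpace ℝ (Fin N) →L[ℝ] EuclideanSpace ℝ (Fin N))).det = 1 := by
    rw [add_zero]; exact LinearMap.det_id
  have := hc.continuousAt (x := 0) |>.eventually (lt_mem_nhds (a := (0:ℝ)) (by simp only [h0]; exact one_pos))
  obtain ⟨ε, hε, h⟩ := Metric.eventually_nhds_iff.1 this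
  exact ⟨ε, hε, fun M hM => h (by simpa using hM)⟩

theorem no_retract {N : ℕ} {K : ℝ≥0} {R : ℝ} (hR : 0 < R)
    (g : EuclideanSpace ℝ (Fin N) → EuclideanSpace ℝ (Fin N)) (hg : LipschitzWith K g)
    (h0 : ∀ z, R ≤ ‖z‖ → g z = 0) (h1 : ∀ z, ‖z‖ < R → ‖z + g z‖ = R) : False := by
  obtain ⟨ε₀, hε₀, hpos⟩ := det_pos_near (N := N)
  set ε : ℝ := min ε₀ 1 / (2 * (K + 1)) with hε
  have hKp : (0 : ℝ) < K + 1 := by positivity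
  have hεp : 0 < ε := by positivity
  have hεK : ε * (K + 1) = min ε₀ 1 / 2 := by rw [hε]; field_simp
  obtain ⟨w, t, ht, hw, hM⟩ := interp_weights (N := N) ε hεp
  set D : Set (EuclideanSpace ℝ (Fin N)) := {x | DifferentiableAt ℝ g x} with hD
  have hDm : MeasurableSet D := measurableSet_of_differentiableAt ℝ g
  have hDae : volume Dᶜ = 0 := by
    have := hg.ae_differentiableAt (μ := (volume : Measure (EuclideanSpace ℝ (Fin N))))
    exact this
  set s : Set (EuclideanSpace ℝ (Fin N)) := ball 0 R ∩ D with hs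
  have hsm : MeasurableSet s := measurableSet_ball.inter hDm
  have main : ∀ τ : ℝ, 0 < τ → τ ≤ ε →
      IntegrableOn (fun x => (1 + τ • fderiv ℝ g x).det) s ∧
      ∫ x in s, (1 + τ • fderiv ℝ g x).det = volume.real (ball (0 : EuclideanSpace ℝ (Fin N)) R) := by
    intro τ hτ hτε
    have hτK : τ * K < 1 := by
      have : τ * (K + 1) ≤ ε * (K + 1) := by gcongr
      have h2 : min ε₀ 1 ≤ 1 := min_le_right _ _
      nlinarith
    have hτε₀ : τ * K < ε₀ := by
      have : τ * (K + 1) ≤ ε * (K + 1) := by gcongr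
      have h2 : min ε₀ 1 ≤ ε₀ := min_le_left _ _
      nlinarith
    set f : EuclideanSpace ℝ (Fin N) → EuclideanSpace ℝ (Fin N) := fun z => z + τ • g z with hf
    have hlip : ∀ x y, ‖g x - g y‖ ≤ K * ‖x - y‖ := fun x y => by
      simpa [dist_eq_norm] using hg.dist_le_mul x y
    have hinj : Function.Injective f := by
      intro x y hxy
      simp only [hf] at hxy
      have h2 : x - y = τ • (g y - g x) := by
        rw [smul_sub]
        rw [sub_eq_iff_eq_add, ← add_right_cancel_iff (a := τ • g x), hxy]; abel
      have h3 : ‖x - y‖ ≤ (τ * K) * ‖x - y‖ := by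
        calc ‖x - y‖ = τ * ‖g y - g x‖ := by
              rw [h2, norm_smul, Real.norm_of_nonneg hτ.le]
          _ ≤ τ * (K * ‖y - x‖) := by gcongr; exact hlip _ _
          _ = _ := by rw [norm_sub_rev, mul_assoc]
      have : ‖x - y‖ = 0 := by
        have := norm_nonneg (x - y)
        nlinarith
      exact sub_eq_zero.1 (norm_eq_zero.1 this)
    have hsurj : Function.Surjective f := by
      intro y
      have hc : ContractingWith (Real.toNNReal (τ * K)) (fun z => y - τ • g z) := by
        refine ⟨by rw [Real.toNNReal_lt_one]; exact hτK, LipschitzWith.of_dist_le_mul fun a b => ?_⟩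
        rw [Real.coe_toNNReal _ (by positivity), dist_eq_norm, dist_eq_norm]
        have : y - τ • g a - (y - τ • g b) = τ • (g b - g a) := by rw [smul_sub]; abel
        rw [this, norm_smul, Real.norm_of_nonneg hτ.le, mul_assoc, norm_sub_rev a b]
        gcongr
        exact hlip _ _
      have := hc.fixedPoint_isFixedPt
      refine ⟨ContractingWith.fixedPoint _ hc, ?_⟩
      have h3 : y - τ • g (ContractingWith.fixedPoint _ hc) = ContractingWith.fixedPoint _ hc := this
      simp only [hf]
      nth_rewrite 1 [← h3]
      abel
    have hid : ∀ z, z ∉ ball (0 : EuclideanSpace ℝ (Fin N)) R → f z = z := by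
      intro z hz
      have : R ≤ ‖z‖ := by simpa using hz
      simp [hf, h0 z this]
    have himg : f '' ball 0 R = ball 0 R := by
      ext y
      constructor
      · rintro ⟨x, hx, rfl⟩
        by_contra hy
        have := hinj (hid _ hy)
        rw [this] at hy
        exact hy hx
      · intro hy
        obtain ⟨x, rfl⟩ := hsurj y
        by_cases hx : x ∈ ball (0 : EuclideanSpace ℝ (Fin N)) R
        · exact ⟨x, hx, rfl⟩
        · rw [hid x hx] at hy; exact absurd hy hx
    have hfl : LipschitzWith (1 + ‖τ‖₊ * K) f := LipschitzWith.id.add ((lipschitzWith_smul τ).comp hg)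
    have hvol : volume (f '' s) = volume (ball (0 : EuclideanSpace ℝ (Fin N)) R) := by
      apply le_antisymm
      · exact measure_mono ((image_mono inter_subset_left).trans himg.le)
      · have hz : volume (f '' Dᶜ) = 0 := by
          have := vol_lip_image (hfl.lipschitzOnWith (s := Dᶜ))
          rw [hDae, mul_zero] at this
          exact le_antisymm this bot_le
        calc volume (ball (0 : EuclideanSpace ℝ (Fin N)) R) ≤ volume (f '' s ∪ f '' Dᶜ) := by
              apply measure_mono
              rw [← himg, ← image_union]
              apply image_mono
              intro x hx
              by_cases hxD : x ∈ D
              · exact Or.inl ⟨hx, hxD⟩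
              · exact Or.inr hxD
          _ ≤ volume (f '' s) + volume (f '' Dᶜ) := measure_union_le _ _
          _ = _ := by rw [hz, add_zero]
    have hder : ∀ x ∈ s, HasFDerivWithinAt f (1 + τ • fderiv ℝ g x) s x := by
      intro x hx
      have : DifferentiableAt ℝ g x := hx.2
      exact ((hasFDerivAt_id x).add (this.hasFDerivAt.const_smul τ)).hasFDerivWithinAt
    have habs : ∀ x, |(1 + τ • fderiv ℝ g x).det| = (1 + τ • fderiv ℝ g x).det := by
      intro x
      apply abs_of_pos
      apply hpos
      rw [norm_smul, Real.norm_of_nonneg hτ.le]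
      refine lt_of_le_of_lt ?_ hτε₀
      gcongr
      exact norm_fderiv_le_of_lipschitz ℝ hg
    have hI := integral_image_eq_integral_abs_det_fderiv_smul volume hsm hder hinj.injOn (fun _ => (1 : ℝ))
    have hJ := integrableOn_image_iff_integrableOn_abs_det_fderiv_smul volume hsm hder hinj.injOn (fun _ => (1 : ℝ))
    simp only [habs, smul_eq_mul, mul_one] at hI hJ
    refine ⟨hJ.1 ?_, ?_⟩
    · rw [integrableOn_const_iff]
      right
      rw [hvol]; exact measure_ball_lt_top
    · rw [← hI]
      simp [Measure.real, hvol]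
  have hzero : ∀ x ∈ s, (1 + fderiv ℝ g x).det = 0 := by
    intro x hx
    have hgx : DifferentiableAt ℝ g x := hx.2
    have hr : HasFDerivAt (fun z => z + g z) (1 + fderiv ℝ g x) x :=
      (hasFDerivAt_id x).add hgx.hasFDerivAt
    have hn := hr.norm_sq
    have hcst : (fun z => ‖z + g z‖ ^ 2) =ᶠ[𝓝 x] fun _ => R ^ 2 := by
      filter_upwards [isOpen_ball.mem_nhds hx.1] with z hz
      rw [h1 z (by simpa using hz)]
    have hn2 := hn.unique ((hasFDerivAt_const (R ^ 2) x).congr_of_eventuallyEq hcst)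
    have horth : ∀ v, ⟪x + g x, (1 + fderiv ℝ g x) v⟫ = 0 := by
      intro v
      have := congrArg (fun L => L v) hn2
      simp [inner_add_left, inner_add_right] at this ⊢
      linarith
    by_contra hne
    have hu : IsUnit (LinearMap.det ((1 + fderiv ℝ g x : EuclideanSpace ℝ (Fin N) →L[ℝ] _) : EuclideanSpace ℝ (Fin N) →ₗ[ℝ] EuclideanSpace ℝ (Fin N))) :=
      isUnit_iff_ne_zero.2 hne
    obtain ⟨v, hv⟩ := ((Module.End.isUnit_iff _).1 ((LinearMap.isUnit_iff_isUnit_det _).2 hu)).2 (x + g x)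
    have h2 := horth v
    have h3 : (1 + fderiv ℝ g x) v = x + g x := hv
    rw [h3, inner_self_eq_zero] at h2
    have h4 := h1 x (by simpa using hx.1)
    rw [h2, norm_zero] at h4
    exact hR.ne h4
  have hint : ∫ x in s, (∑ i ∈ Finset.range (N + 1), w i * (1 + t i • fderiv ℝ g x).det) = 0 := by
    rw [setIntegral_congr_fun hsm (g := fun _ => (0 : ℝ))]
    · simp
    · intro x hx
      simp only
      rw [← hM, hzero x hx]
  rw [integral_finsetSum] at hint
  · have : ∀ i ∈ Finset.range (N + 1), ∫ x in s, w i * (1 + t i • fderiv ℝ g x).det =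
        w i * volume.real (ball (0 : EuclideanSpace ℝ (Fin N)) R) := by
      intro i hi
      rw [integral_const_mul, (main _ (ht i hi).1 (ht i hi).2).2]
    rw [Finset.sum_congr rfl this, ← Finset.sum_mul, hw, one_mul] at hint
    have hp : 0 < volume.real (ball (0 : EuclideanSpace ℝ (Fin N)) R) :=
      ENNReal.toReal_pos (measure_ball_pos volume _ hR).ne' measure_ball_lt_top.ne
    exact hp.ne' hint
  · intro i hi
    exact (main _ (ht i hi).1 (ht i hi).2).1.const_mul _

/-- Lipschitz on a set, with some constant. -/
def LipOn {X Y : Type*} [PseudoMetricSpace X] [PseudoMetricSpace Y] (f : X → Y) (s : Set X) : Prop :=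
  ∃ K : ℝ≥0, LipschitzOnWith K f s

theorem LipOn.of_dist {X Y : Type*} [PseudoMetricSpace X] [PseudoMetricSpace Y] {f : X → Y} {s : Set X}
    (C : ℝ) (h : ∀ x ∈ s, ∀ y ∈ s, dist (f x) (f y) ≤ C * dist x y) : LipOn f s := by
  refine ⟨Real.toNNReal C, LipschitzOnWith.of_dist_le_mul fun x hx y hy => (h x hx y hy).trans ?_⟩
  gcongr
  exact Real.le_coe_toNNReal C

theorem LipOn.smul' {X V : Type*} [PseudoMetricSpace X] [NormedAddCommGroup V] [NormedSpace ℝ V]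
    {a : X → ℝ} {f : X → V} {s : Set X} (ha : LipOn a s) (hf : LipOn f s)
    {A B : ℝ} (hA : ∀ x ∈ s, ‖a x‖ ≤ A) (hB : ∀ x ∈ s, ‖f x‖ ≤ B) : LipOn (fun x => a x • f x) s := by
  obtain ⟨Ka, ha⟩ := ha
  obtain ⟨Kf, hf⟩ := hf
  refine LipOn.of_dist (A * Kf + Ka * B) fun x hx y hy => ?_
  have h1 := ha.dist_le_mul x hx y hy
  have h2 := hf.dist_le_mul x hx y hy
  rw [dist_eq_norm] at h1 h2 ⊢
  have e : a x • f x - a y • f y = a x • (f x - f y) + (a x - a y) • f y := by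
    rw [smul_sub, sub_smul]; abel
  have hA0 : 0 ≤ A := (norm_nonneg _).trans (hA x hx)
  calc ‖a x • f x - a y • f y‖ ≤ ‖a x‖ * ‖f x - f y‖ + ‖a x - a y‖ * ‖f y‖ := by
        rw [e]; refine (norm_add_le _ _).trans ?_; rw [norm_smul, norm_smul]
    _ ≤ A * (Kf * dist x y) + (Ka * dist x y) * B := by
        gcongr
        · exact hA x hx
        · exact hB y hy
    _ = _ := by ring

theorem LipOn.comp' {X Y Z : Type*} [PseudoMetricSpace X] [PseudoMetricSpace Y] [PseudoMetricSpace Z]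
    {f : X → Y} {g : Y → Z} {s : Set X} {t : Set Y} (hg : LipOn g t) (hf : LipOn f s)
    (h : MapsTo f s t) : LipOn (fun x => g (f x)) s := by
  obtain ⟨Ka, ha⟩ := hg
  obtain ⟨Kf, hf⟩ := hf
  exact ⟨_, ha.comp hf h⟩

theorem LipOn.add' {X V : Type*} [PseudoMetricSpace X] [NormedAddCommGroup V]
    {g f : X → V} {s : Set X} (hg : LipOn g s) (hf : LipOn f s) : LipOn (fun x => g x + f x) s := by
  obtain ⟨Ka, ha⟩ := hg
  obtain ⟨Kf, hf⟩ := hf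
  exact ⟨_, ha.add hf⟩

theorem LipOn.sub' {X V : Type*} [PseudoMetricSpace X] [NormedAddCommGroup V]
    {g f : X → V} {s : Set X} (hg : LipOn g s) (hf : LipOn f s) : LipOn (fun x => g x - f x) s := by
  obtain ⟨Ka, ha⟩ := hg
  obtain ⟨Kf, hf⟩ := hf
  exact ⟨_, ha.sub hf⟩

theorem LipOn.const' {X V : Type*} [PseudoMetricSpace X] [PseudoMetricSpace V] (c : V)
    (s : Set X) : LipOn (fun _ => c) s := ⟨0, (LipschitzWith.const c).lipschitzOnWith⟩

theorem LipOn.id' {X : Type*} [PseudoMetricSpace X] 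
    (s : Set X) : LipOn (fun x => x) s := ⟨1, LipschitzWith.id.lipschitzOnWith⟩

theorem LipOn.norm' {X V : Type*} [PseudoMetricSpace X] [NormedAddCommGroup V]
    {f : X → V} {s : Set X} (hf : LipOn f s) : LipOn (fun x => ‖f x‖) s :=
  LipOn.comp' (t := univ) ⟨1, lipschitzWith_one_norm.lipschitzOnWith⟩ hf (mapsTo_univ _ _)

theorem LipOn.inv' {X : Type*} [PseudoMetricSpace X]
    {f : X → ℝ} {s : Set X} (hf : LipOn f s) {m : ℝ} (hm : 0 < m) (h : ∀ x ∈ s, m ≤ f x) :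
    LipOn (fun x => (f x)⁻¹) s := by
  obtain ⟨K, hf⟩ := hf
  refine LipOn.of_dist (K * (m⁻¹ * m⁻¹)) fun x hx y hy => ?_
  have h1 := hf.dist_le_mul x hx y hy
  have hx' := h x hx
  have hy' := h y hy
  have px : 0 < f x := hm.trans_le hx'
  have py : 0 < f y := hm.trans_le hy'
  rw [Real.dist_eq] at h1 ⊢
  have e : (f x)⁻¹ - (f y)⁻¹ = - (f x - f y) * ((f x)⁻¹ * (f y)⁻¹) := by field_simp; ring
  rw [e, abs_mul, abs_neg, abs_of_pos (by positivity : 0 < (f x)⁻¹ * (f y)⁻¹)]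
  calc |f x - f y| * ((f x)⁻¹ * (f y)⁻¹) ≤ (K * dist x y) * (m⁻¹ * m⁻¹) := by gcongr
    _ = _ := by ring

theorem LipOn.max' {X : Type*} [PseudoMetricSpace X] {f : X → ℝ} {s : Set X} (hf : LipOn f s) (c : ℝ) :
    LipOn (fun x => max c (f x)) s := by
  obtain ⟨K, hf⟩ := hf
  refine LipOn.of_dist K fun x hx y hy => ?_
  refine le_trans ?_ (hf.dist_le_mul x hx y hy)
  rw [Real.dist_eq, Real.dist_eq, max_comm c, max_comm c]
  exact abs_max_sub_max_le_abs _ _ _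

theorem LipOn.min' {X : Type*} [PseudoMetricSpace X] {f : X → ℝ} {s : Set X} (hf : LipOn f s) (c : ℝ) :
    LipOn (fun x => min c (f x)) s := by
  have h := ((LipOn.const' (0:ℝ) s).sub' (((LipOn.const' (0:ℝ) s).sub' hf).max' (-c)))
  have e : (fun x => min c (f x)) = fun x => 0 - max (-c) (0 - f x) := by
    funext x; simp [max_neg_neg]
  rw [e]; exact h

theorem LipOn.continuousOn {X Y : Type*} [PseudoMetricSpace X] [PseudoMetricSpace Y] {f : X → Y} {s : Set X}
    (h : LipOn f s) : ContinuousOn f s := by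
  obtain ⟨K, h⟩ := h
  exact h.continuousOn

theorem LipOn.bdd {X V : Type*} [PseudoMetricSpace X] [NormedAddCommGroup V] {f : X → V} {s : Set X}
    (h : LipOn f s) (hs : IsCompact s) : ∃ B, ∀ x ∈ s, ‖f x‖ ≤ B :=
  hs.exists_bound_of_continuousOn h.continuousOn

/-- radial projection onto the closed ball is Lipschitz on every closed ball, indeed 1-Lipschitz; 
we use a crude bound. -/
theorem radial_lip {N : ℕ} {R : ℝ} (hR : 0 < R) :
    LipschitzWith 2 (fun z : EuclideanSpace ℝ (Fin N) => (R / max R ‖z‖) • z) := by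
  refine LipschitzWith.of_dist_le_mul fun x y => ?_
  rw [dist_eq_norm, dist_eq_norm]
  have hx : 0 < max R ‖x‖ := lt_max_of_lt_left hR
  have hy : 0 < max R ‖y‖ := lt_max_of_lt_left hR
  have e : (R / max R ‖x‖) • x - (R / max R ‖y‖) • y =
      (R / max R ‖x‖) • (x - y) + (R / max R ‖x‖ - R / max R ‖y‖) • y := by
    rw [smul_sub, sub_smul]; abel
  have h1 : R / max R ‖x‖ ≤ 1 := (div_le_one hx).2 (le_max_left _ _)
  have h2 : |R / max R ‖x‖ - R / max R ‖y‖| * ‖y‖ ≤ ‖x - y‖ := by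
    have e2 : R / max R ‖x‖ - R / max R ‖y‖ = (R / max R ‖x‖) * ((max R ‖y‖ - max R ‖x‖) / max R ‖y‖) := by
      field_simp
    rw [e2, abs_mul, abs_of_pos (by positivity : 0 < R / max R ‖x‖), abs_div, abs_of_pos hy]
    have h3 : |max R ‖y‖ - max R ‖x‖| ≤ ‖x - y‖ := by
      rw [max_comm R, max_comm R]
      refine (abs_max_sub_max_le_abs _ _ _).trans ?_
      rw [norm_sub_rev]
      exact abs_norm_sub_norm_le _ _
    have h4 : ‖y‖ / max R ‖y‖ ≤ 1 := (div_le_one hy).2 (le_max_right _ _)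
    calc R / max R ‖x‖ * (|max R ‖y‖ - max R ‖x‖| / max R ‖y‖) * ‖y‖ 
        = R / max R ‖x‖ * (|max R ‖y‖ - max R ‖x‖| * (‖y‖ / max R ‖y‖)) := by ring
      _ ≤ 1 * (‖x - y‖ * 1) := by gcongr
      _ = _ := by ring
  rw [e]
  refine (norm_add_le _ _).trans ?_
  rw [norm_smul, norm_smul, Real.norm_of_nonneg (by positivity : 0 ≤ R / max R ‖x‖), Real.norm_eq_abs]
  have : R / max R ‖x‖ * ‖x - y‖ ≤ 1 * ‖x - y‖ := by gcongr
  simp only [NNReal.coe_ofNat]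
  linarith

theorem exists_zero {N : ℕ} {R : ℝ} (hR : 0 < R)
    (H : EuclideanSpace ℝ (Fin N) → EuclideanSpace ℝ (Fin N)) (hH : LipOn H (closedBall 0 R))
    (hc : ∀ z ∈ closedBall (0 : EuclideanSpace ℝ (Fin N)) R, ‖H z - z‖ ≤ R / 4) :
    ∃ z ∈ closedBall (0 : EuclideanSpace ℝ (Fin N)) R, H z = 0 := by
  by_contra! hne
  set B := closedBall (0 : EuclideanSpace ℝ (Fin N)) R with hB
  have hBc : IsCompact B := isCompact_closedBall _ _
  set χ : EuclideanSpace ℝ (Fin N) → ℝ := fun z => max 0 (min 1 (2 - (2 / R) • ‖z‖)) with hχ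
  have hχ1 : ∀ z, ‖z‖ ≤ R / 2 → χ z = 1 := by
    intro z hz
    have : 2 / R * ‖z‖ ≤ 1 := by
      calc 2 / R * ‖z‖ ≤ 2 / R * (R / 2) := by gcongr
        _ = 1 := by field_simp
    simp only [hχ, smul_eq_mul]
    rw [min_eq_left (by linarith)]; simp
  have hχ0 : ∀ z, 0 ≤ χ z := fun z => le_max_left _ _
  have hχle : ∀ z, χ z ≤ 1 := fun z => max_le zero_le_one (min_le_left _ _)
  have hχR : ∀ z, ‖z‖ = R → χ z = 0 := by
    intro z hz
    simp only [hχ, smul_eq_mul, hz]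
    rw [div_mul_cancel₀ _ hR.ne']; simp
  have hχl : LipOn χ B := by
    apply LipOn.max'
    apply LipOn.min'
    apply (LipOn.const' _ _).sub'
    exact LipOn.smul' (LipOn.const' _ _) (LipOn.id' _).norm' (A := ‖2 / R‖) (B := R)
      (fun _ _ => le_rfl) (fun x hx => by simpa [hB] using hx)
  set Q : EuclideanSpace ℝ (Fin N) → EuclideanSpace ℝ (Fin N) := fun z => z + χ z • (H z - z) with hQ
  have hQl : LipOn Q B :=
    (LipOn.id' _).add' (LipOn.smul' hχl (hH.sub' (LipOn.id' _)) (A := 1) (B := R / 4)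
      (fun x _ => by rw [Real.norm_of_nonneg (hχ0 x)]; exact hχle x) hc)
  have hQne : ∀ z ∈ B, Q z ≠ 0 := by
    intro z hz hz0
    by_cases h : ‖z‖ ≤ R / 2
    · simp only [hQ, hχ1 z h, one_smul] at hz0
      exact hne z hz (by simpa using hz0)
    · have h1 : ‖z‖ ≤ R / 4 := by
        have : z = - (χ z • (H z - z)) := eq_neg_of_add_eq_zero_left hz0
        rw [this, norm_neg, norm_smul, Real.norm_of_nonneg (hχ0 z)]
        calc χ z * ‖H z - z‖ ≤ 1 * (R / 4) := by
              gcongr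
              · exact hχle z
              · exact hc z hz
          _ = _ := one_mul _
      linarith
  obtain ⟨z₀, hz₀, hmin⟩ := hBc.exists_isMinOn ⟨0, by simp [hB, hR.le]⟩ hQl.norm'.continuousOn
  have hm : 0 < ‖Q z₀‖ := norm_pos_iff.2 (hQne z₀ hz₀)
  have hml : ∀ z ∈ B, ‖Q z₀‖ ≤ ‖Q z‖ := fun z hz => hmin hz
  have hinv : LipOn (fun z => ‖Q z‖⁻¹) B := hQl.norm'.inv' hm hml
  obtain ⟨b, hb⟩ := hQl.bdd hBc
  obtain ⟨b', hb'⟩ := hinv.bdd hBc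
  have hnl : LipOn (fun z => ‖Q z‖⁻¹ • Q z) B := hinv.smul' hQl hb' hb
  have hnn : ∀ z ∈ B, ‖‖Q z‖⁻¹ • Q z‖ = 1 := by
    intro z hz
    rw [norm_smul, norm_inv, norm_norm]
    exact inv_mul_cancel₀ (norm_ne_zero_iff.2 (hQne z hz))
  have hgl : LipOn (fun z => R • (‖Q z‖⁻¹ • Q z) - z) B :=
    (LipOn.smul' (LipOn.const' R _) hnl (A := ‖R‖) (B := 1) (fun _ _ => le_rfl)
      (fun z hz => (hnn z hz).le)).sub' (LipOn.id' _)
  have hmaps : ∀ z, (R / max R ‖z‖) • z ∈ B := by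
    intro z
    have hx : 0 < max R ‖z‖ := lt_max_of_lt_left hR
    simp only [hB, mem_closedBall, dist_zero_right, norm_smul]
    rw [Real.norm_of_nonneg (by positivity), div_mul_eq_mul_div, div_le_iff₀ hx]
    gcongr
    exact le_max_right _ _
  obtain ⟨K, hK⟩ := LipOn.comp' (s := univ) hgl ⟨2, (radial_lip hR).lipschitzOnWith⟩ (fun z _ => hmaps z)
  refine no_retract hR _ (lipschitzOnWith_univ.1 hK) ?_ ?_
  · intro z hz
    have hzp : 0 < ‖z‖ := hR.trans_le hz
    have hn : ‖(R / max R ‖z‖) • z‖ = R := by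
      rw [max_eq_right hz, norm_smul, Real.norm_of_nonneg (by positivity)]
      field_simp
    have : Q ((R / max R ‖z‖) • z) = (R / max R ‖z‖) • z := by
      simp only [hQ]; rw [hχR _ hn, zero_smul, add_zero]
    simp only [this, hn]
    rw [smul_smul, mul_inv_cancel₀ hR.ne', one_smul, sub_self]
  · intro z hz
    have hzB : z ∈ B := by simpa [hB] using hz.le
    have : (R / max R ‖z‖) • z = z := by
      rw [max_eq_left hz.le, div_self hR.ne', one_smul]
    simp only [this, add_sub_cancel]
    rw [norm_smul, hnn z hzB, mul_one, Real.norm_of_nonneg hR.le]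

theorem cover {N : ℕ} {K L : ℝ≥0} {Φ Ψ : EuclideanSpace ℝ (Fin N) → EuclideanSpace ℝ (Fin N)}
    (hΦ : LipschitzWith K Φ) (hΨ : LipschitzWith L Ψ) {x p : EuclideanSpace ℝ (Fin N)} {R : ℝ}
    (hR : 0 < R)
    (hc : ∀ z ∈ closedBall x R, ‖Ψ (Φ z) - z‖ ≤ R / (128 * (K + 1) * (L + 1)))
    (hp : ‖p - Φ x‖ ≤ R / (32 * (L + 1))) : ∃ z ∈ closedBall x R, Φ z = p := by
  by_contra! hne
  set B := closedBall (0 : EuclideanSpace ℝ (Fin N)) R with hB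
  have hBc : IsCompact B := isCompact_closedBall _ _
  have hBx : ∀ z ∈ B, x + z ∈ closedBall x R := by
    intro z hz
    simpa [hB] using hz
  have hK1 : (1 : ℝ) ≤ K + 1 := by simp
  have hL1 : (1 : ℝ) ≤ L + 1 := by simp
  set δ : ℝ := R / (16 * (L + 1)) with hδ
  have hδp : 0 < δ := by positivity
  set η : ℝ := R / (128 * (K + 1) * (L + 1)) with hη
  have hηp : 0 < η := by positivity
  have hηR : η ≤ R / 128 := by
    rw [hη]; gcongr
    nlinarith
  have hδR : L * δ ≤ R / 16 := by
    have : (L + 1) * δ = R / 16 := by rw [hδ]; field_simp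
    nlinarith
  have hδη : δ / 2 = (K + 1) * (4 * η) := by rw [hδ, hη]; field_simp; norm_num
  have hpδ : ‖p - Φ x‖ ≤ δ / 2 := by
    refine hp.trans (le_of_eq ?_); rw [hδ]; field_simp; norm_num
  -- choose a regular value
  obtain ⟨q, hq, hqS⟩ : ∃ q ∈ ball x η, q ∉ Ψ '' sphere p δ := by
    by_contra! h
    have h1 : volume (ball x η) ≤ volume (Ψ '' sphere p δ) := measure_mono h
    have h2 := vol_lip_image (hΨ.lipschitzOnWith (s := sphere p δ))
    rw [Measure.addHaar_sphere_of_ne_zero volume p hδp.ne', mul_zero] at h2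
    exact absurd (h1.trans h2) (not_le.2 (measure_ball_pos volume x hηp))
  have hqx : ‖q - x‖ < η := by simpa [dist_eq_norm] using hq
  set Y : EuclideanSpace ℝ (Fin N) → EuclideanSpace ℝ (Fin N) := fun z => Φ (x + z) - p with hY
  have hYl : LipOn Y B := by
    refine LipOn.sub' ?_ (LipOn.const' _ _)
    exact LipOn.comp' (t := univ) ⟨K, hΦ.lipschitzOnWith⟩ ((LipOn.const' x B).add' (LipOn.id' B))
      (mapsTo_univ _ _)
  have hYne : ∀ z ∈ B, Y z ≠ 0 := fun z hz h => hne _ (hBx z hz) (sub_eq_zero.1 h)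
  obtain ⟨z₀, hz₀, hmin⟩ := hBc.exists_isMinOn ⟨0, by simp [hB, hR.le]⟩ hYl.norm'.continuousOn
  have hm : 0 < ‖Y z₀‖ := norm_pos_iff.2 (hYne z₀ hz₀)
  have hml : ∀ z ∈ B, ‖Y z₀‖ ≤ ‖Y z‖ := fun z hz => hmin hz
  have hinv : LipOn (fun z => ‖Y z‖⁻¹) B := hYl.norm'.inv' hm hml
  obtain ⟨b', hb'⟩ := hinv.bdd hBc
  have hσ : LipOn (fun z => max 1 (δ • ‖Y z‖⁻¹)) B :=
    (LipOn.smul' (LipOn.const' δ B) hinv (A := ‖δ‖) (fun _ _ => le_rfl) hb').max' 1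
  obtain ⟨b₁, hb₁⟩ := hσ.bdd hBc
  obtain ⟨b₂, hb₂⟩ := hYl.bdd hBc
  have hPl : LipOn (fun z => p + max 1 (δ • ‖Y z‖⁻¹) • Y z) B :=
    (LipOn.const' p B).add' (hσ.smul' hYl hb₁ hb₂)
  have hHl : LipOn (fun z => Ψ (p + max 1 (δ • ‖Y z‖⁻¹) • Y z) - q) B := by
    refine LipOn.sub' ?_ (LipOn.const' _ _)
    exact LipOn.comp' (t := univ) ⟨L, hΨ.lipschitzOnWith⟩ hPl (mapsTo_univ _ _)
  have hfar : ∀ z ∈ B, δ ≤ ‖Y z‖ → p + max 1 (δ • ‖Y z‖⁻¹) • Y z = Φ (x + z) := by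
    intro z hz h
    have hyp : 0 < ‖Y z‖ := hδp.trans_le h
    have : δ • ‖Y z‖⁻¹ ≤ 1 := by
      rw [smul_eq_mul, ← div_eq_mul_inv]; exact (div_le_one hyp).2 h
    rw [max_eq_left this, one_smul, hY]; simp
  have hnear : ∀ z ∈ B, ‖Y z‖ < δ → p + max 1 (δ • ‖Y z‖⁻¹) • Y z ∈ sphere p δ ∧
      ‖(p + max 1 (δ • ‖Y z‖⁻¹) • Y z) - Φ (x + z)‖ ≤ δ := by
    intro z hz h
    have hyp : 0 < ‖Y z‖ := norm_pos_iff.2 (hYne z hz)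
    have h1 : 1 ≤ δ • ‖Y z‖⁻¹ := by
      rw [smul_eq_mul, ← div_eq_mul_inv]; exact (one_le_div hyp).2 h.le
    rw [max_eq_right h1]
    constructor
    · rw [mem_sphere, dist_eq_norm, add_sub_cancel_left, norm_smul, Real.norm_of_nonneg (zero_le_one.trans h1)]
      simp only [smul_eq_mul]
      field_simp
    · have : p + (δ • ‖Y z‖⁻¹) • Y z - Φ (x + z) = (δ • ‖Y z‖⁻¹ - 1) • Y z := by
        have e : Φ (x + z) = Y z + p := by simp [hY]
        rw [sub_smul, one_smul, e]; abel
      rw [this, norm_smul, Real.norm_of_nonneg (by linarith)]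
      simp only [smul_eq_mul]
      have : (δ * ‖Y z‖⁻¹ - 1) * ‖Y z‖ = δ - ‖Y z‖ := by field_simp
      rw [this]; linarith
  obtain ⟨z, hz, hz0⟩ := exists_zero hR _ hHl (by
    intro z hz
    have h1 : ‖(p + max 1 (δ • ‖Y z‖⁻¹) • Y z) - Φ (x + z)‖ ≤ δ := by
      rcases le_or_gt δ ‖Y z‖ with h | h
      · rw [hfar z hz h, sub_self, norm_zero]; exact hδp.le
      · exact (hnear z hz h).2
    have h2 := hΨ.dist_le_mul (p + max 1 (δ • ‖Y z‖⁻¹) • Y z) (Φ (x + z))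
    rw [dist_eq_norm, dist_eq_norm] at h2
    have h3 := hc _ (hBx z hz)
    have e : Ψ (p + max 1 (δ • ‖Y z‖⁻¹) • Y z) - q - z =
      (Ψ (p + max 1 (δ • ‖Y z‖⁻¹) • Y z) - Ψ (Φ (x + z))) + (Ψ (Φ (x + z)) - (x + z)) - (q - x) := by abel
    rw [e]
    refine (norm_sub_le _ _).trans ?_
    have h4 := norm_add_le (Ψ (p + max 1 (δ • ‖Y z‖⁻¹) • Y z) - Ψ (Φ (x + z))) (Ψ (Φ (x + z)) - (x + z))
    have h5 : (L : ℝ) * ‖(p + max 1 (δ • ‖Y z‖⁻¹) • Y z) - Φ (x + z)‖ ≤ L * δ := by gcongr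
    linarith)
  have hz0' : Ψ (p + max 1 (δ • ‖Y z‖⁻¹) • Y z) = q := sub_eq_zero.1 hz0
  rcases le_or_gt δ ‖Y z‖ with h | h
  · rw [hfar z hz h] at hz0'
    have h3 := hc _ (hBx z hz)
    rw [hz0'] at h3
    have h4 : ‖z‖ ≤ 2 * η := by
      have e : z = (q - x) - (q - (x + z)) := by abel
      rw [e]
      refine (norm_sub_le _ _).trans ?_
      linarith
    have h5 := hΦ.dist_le_mul (x + z) x
    rw [dist_eq_norm, dist_eq_norm, add_sub_cancel_left] at h5
    have h6 : ‖Y z‖ ≤ ‖Φ (x + z) - Φ x‖ + ‖p - Φ x‖ := by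
      have e : Y z = (Φ (x + z) - Φ x) - (p - Φ x) := by simp only [hY]; abel
      rw [e]; exact norm_sub_le _ _
    have h7 : (K : ℝ) * ‖z‖ ≤ (K + 1) * (2 * η) := by gcongr; simp
    nlinarith
  · exact hqS ⟨_, (hnear z hz h).1, hz0'⟩

theorem vol_ball_mul {N : ℕ} (x y : EuclideanSpace ℝ (Fin N)) {c : ℝ} (hc : 0 < c) (r : ℝ) :
    volume (ball x (c * r)) = ENNReal.ofReal (c ^ N) * volume (ball y r) := by
  rw [Measure.addHaar_ball_mul_of_pos volume x hc r, finrank_euclideanSpace, Fintype.card_fin,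
    Measure.addHaar_ball_center volume y]

theorem tendsto_mul_pos {C : ℝ} (hC : 0 < C) : Tendsto (fun r : ℝ => C * r) (𝓝[>] 0) (𝓝[>] 0) := by
  apply tendsto_nhdsWithin_of_tendsto_nhds_of_eventually_within
  · have : Tendsto (fun r : ℝ => C * r) (𝓝 0) (𝓝 (C * 0)) := tendsto_id.const_mul C
    rw [mul_zero] at this
    exact this.mono_left nhdsWithin_le_nhds
  · filter_upwards [self_mem_nhdsWithin] with r hr
    exact mul_pos hC hr

theorem density_transfer {N : ℕ} {s s' : Set (EuclideanSpace ℝ (Fin N))}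
    {x y : EuclideanSpace ℝ (Fin N)} {C : ℝ} (hC : 0 < C) {M : ℝ≥0∞} (hM : M ≠ ⊤)
    (h : ∀ᶠ r in 𝓝[>] (0 : ℝ), volume (s' ∩ ball y r) ≤ M * volume (s ∩ ball x (C * r)))
    (hx : x ∈ densityZeroPts s) : y ∈ densityZeroPts s' := by
  have h1 := Tendsto.comp (show Tendsto _ _ _ from hx) (tendsto_mul_pos hC)
  have h2 := ENNReal.Tendsto.const_mul (a := M * ENNReal.ofReal (C ^ N)) h1
    (Or.inr (ENNReal.mul_ne_top hM ENNReal.ofReal_ne_top))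
  rw [mul_zero] at h2
  refine tendsto_of_tendsto_of_tendsto_of_le_of_le' tendsto_const_nhds h2
    (Eventually.of_forall fun _ => bot_le) ?_
  filter_upwards [h, self_mem_nhdsWithin] with r hr hr0
  have hc0 : ENNReal.ofReal (C ^ N) ≠ 0 := by
    simp only [ne_eq, ENNReal.ofReal_eq_zero, not_le]; positivity
  have hv0 : volume (ball y r) ≠ 0 := (measure_ball_pos volume y hr0).ne'
  simp only [Function.comp_apply]
  rw [vol_ball_mul x y hC r]
  calc volume (s' ∩ ball y r) / volume (ball y r)
      ≤ (M * volume (s ∩ ball x (C * r))) / volume (ball y r) := by gcongr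
    _ = _ := by
      rw [mul_assoc, ← mul_div_assoc (ENNReal.ofReal (C ^ N)),
        ENNReal.mul_div_mul_left _ _ hc0 ENNReal.ofReal_ne_top, mul_div_assoc]

theorem zero_compl_of_one {N : ℕ} {A : Set (EuclideanSpace ℝ (Fin N))} (hA : MeasurableSet A)
    {x : EuclideanSpace ℝ (Fin N)} (hx : x ∈ densityOnePts A) : x ∈ densityZeroPts Aᶜ := by
  have h1 : Tendsto (fun r : ℝ => 1 - volume (A ∩ ball x r) / volume (ball x r)) (𝓝[>] 0) (𝓝 (1 - 1)) :=
    ENNReal.Tendsto.sub tendsto_const_nhds hx (Or.inl ENNReal.one_ne_top)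
  rw [tsub_self] at h1
  refine h1.congr' ?_
  filter_upwards [self_mem_nhdsWithin] with r hr
  have hv0 : volume (ball x r) ≠ 0 := (measure_ball_pos volume x hr).ne'
  have hvt : volume (ball x r) ≠ ⊤ := measure_ball_lt_top.ne
  have hsum : volume (A ∩ ball x r) + volume (Aᶜ ∩ ball x r) = volume (ball x r) := by
    rw [inter_comm, inter_comm Aᶜ, ← sdiff_eq]
    exact measure_inter_add_sdiff _ hA
  rw [← ENNReal.div_self hv0 hvt]
  nth_rewrite 1 [← hsum]
  rw [ENNReal.add_div]
  refine ENNReal.add_sub_cancel_left ?_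
  exact (ENNReal.div_lt_top (measure_ne_top_of_subset inter_subset_right hvt) hv0).ne

theorem one_of_zero_compl {N : ℕ} {A : Set (EuclideanSpace ℝ (Fin N))} 
    {x : EuclideanSpace ℝ (Fin N)} (hx : x ∈ densityZeroPts Aᶜ) : x ∈ densityOnePts A := by
  have h1 : Tendsto (fun r : ℝ => 1 - volume (Aᶜ ∩ ball x r) / volume (ball x r)) (𝓝[>] 0) (𝓝 (1 - 0)) :=
    ENNReal.Tendsto.sub tendsto_const_nhds hx (Or.inl ENNReal.one_ne_top)
  rw [tsub_zero] at h1
  refine tendsto_of_tendsto_of_tendsto_of_le_of_le' h1 tendsto_const_nhds ?_ ?_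
  · filter_upwards [self_mem_nhdsWithin] with r hr
    have hv0 : volume (ball x r) ≠ 0 := (measure_ball_pos volume x hr).ne'
    have hvt : volume (ball x r) ≠ ⊤ := measure_ball_lt_top.ne
    rw [tsub_le_iff_right, ← ENNReal.add_div, ← ENNReal.div_self hv0 hvt]
    gcongr
    refine le_trans (measure_mono ?_) (measure_union_le _ _)
    rw [← union_inter_distrib_right, union_compl_self, univ_inter]
  · refine Eventually.of_forall fun r => ?_
    exact ENNReal.div_le_of_le_mul (by rw [one_mul]; exact measure_mono inter_subset_right)

theorem near_of_density {N : ℕ} {A : Set (EuclideanSpace ℝ (Fin N))} 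
    {x : EuclideanSpace ℝ (Fin N)} (hx : x ∈ densityZeroPts Aᶜ) {η : ℝ} (hη : 0 < η) :
    ∀ᶠ R in 𝓝[>] (0 : ℝ), ∀ z ∈ closedBall x R, ∃ a ∈ A, dist a z < η * R := by
  have hk : 0 < η / (1 + η) := by positivity
  have hpos : 0 < ENNReal.ofReal ((η / (1 + η)) ^ N) := by
    rw [ENNReal.ofReal_pos]; positivity
  have h1 := Tendsto.comp (show Tendsto _ _ _ from hx) (tendsto_mul_pos (by positivity : 0 < 1 + η))
  filter_upwards [h1.eventually (gt_mem_nhds hpos), self_mem_nhdsWithin] with R hlt hR z hz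
  have hR' : 0 < R := hR
  by_contra! hno
  have hsub : ball z (η * R) ⊆ Aᶜ ∩ ball x ((1 + η) * R) := by
    intro a ha
    refine ⟨fun haA => absurd (mem_ball.1 ha) (not_lt.2 (hno a haA)), ?_⟩
    have h2 := dist_triangle a z x
    have h3 := mem_ball.1 ha
    have h4 := mem_closedBall.1 hz
    rw [mem_ball]; linarith
  have hvt : volume (ball x ((1 + η) * R)) ≠ ⊤ := measure_ball_lt_top.ne
  have hv0 : volume (ball x ((1 + η) * R)) ≠ 0 := (measure_ball_pos volume x (by positivity)).ne'
  have e : η * R = (η / (1 + η)) * ((1 + η) * R) := by field_simp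
  have h5 := measure_mono (μ := volume) hsub
  rw [e, vol_ball_mul z x hk] at h5
  simp only [Function.comp_apply] at hlt
  rw [ENNReal.div_lt_iff (Or.inl hv0) (Or.inl hvt)] at hlt
  exact absurd h5 (not_le.2 hlt)

theorem zero_image {N : ℕ} {A : Set (EuclideanSpace ℝ (Fin N))} {K L : ℝ≥0}
    {φ ψ : EuclideanSpace ℝ (Fin N) → EuclideanSpace ℝ (Fin N)}
    (hφ : LipschitzOnWith K φ (closure A)) (hψ : LipschitzOnWith L ψ (φ '' closure A))
    (hinv : ∀ z ∈ closure A, ψ (φ z) = z) {x : EuclideanSpace ℝ (Fin N)} (hxA : x ∈ closure A)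
    (hx : x ∈ densityZeroPts A) : φ x ∈ densityZeroPts (φ '' A) := by
  refine density_transfer (C := L + 1) (by positivity) (M := (K : ℝ≥0∞) ^ N)
    (ENNReal.pow_ne_top ENNReal.coe_ne_top) ?_ hx
  filter_upwards [self_mem_nhdsWithin] with r hr
  have hr' : 0 < r := hr
  refine le_trans (measure_mono ?_) (vol_lip_image (hφ.mono (inter_subset_left.trans subset_closure)))
  rintro _ ⟨⟨a, ha, rfl⟩, har⟩
  refine ⟨a, ⟨ha, ?_⟩, rfl⟩
  have h1 := hψ.dist_le_mul _ (mem_image_of_mem φ (subset_closure ha)) _ (mem_image_of_mem φ hxA)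
  rw [hinv a (subset_closure ha), hinv x hxA] at h1
  have h2 := mem_ball.1 har
  have h3 : (L : ℝ) * dist (φ a) (φ x) ≤ L * r := by gcongr
  rw [mem_ball]; nlinarith

theorem one_image {N : ℕ} {A : Set (EuclideanSpace ℝ (Fin N))} (hA : MeasurableSet A) {K L : ℝ≥0}
    {φ ψ : EuclideanSpace ℝ (Fin N) → EuclideanSpace ℝ (Fin N)}
    (hφ : LipschitzOnWith K φ (closure A)) (hψ : LipschitzOnWith L ψ (φ '' closure A))
    (hinv : ∀ z ∈ closure A, ψ (φ z) = z) {x : EuclideanSpace ℝ (Fin N)} (hxA : x ∈ closure A)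
    (hx : x ∈ densityOnePts A) : φ x ∈ densityOnePts (φ '' A) := by
  obtain ⟨Φ, hΦ, hΦe⟩ := hφ.extend_finite_dimension
  obtain ⟨Ψ, hΨ, hΨe⟩ := hψ.extend_finite_dimension
  generalize lipschitzExtensionConstant (EuclideanSpace ℝ (Fin N)) * K = K' at hΦ
  generalize lipschitzExtensionConstant (EuclideanSpace ℝ (Fin N)) * L = L' at hΨ
  have hz := zero_compl_of_one hA hx
  apply one_of_zero_compl
  refine density_transfer (C := 64 * (L' + 1)) (by positivity) (M := (K' : ℝ≥0∞) ^ N)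
    (ENNReal.pow_ne_top ENNReal.coe_ne_top) ?_ hz
  have hηp : (0 : ℝ) < 1 / (128 * (K' + 1) * (L' + 1)) / (L' * K' + 1) := by positivity
  have hev := (tendsto_mul_pos (by positivity : (0 : ℝ) < 32 * (L' + 1))).eventually
    (near_of_density hz hηp)
  filter_upwards [hev, self_mem_nhdsWithin] with r hnear hr
  have hr' : 0 < r := hr
  set R : ℝ := 32 * (L' + 1) * r with hRdef
  have hR : 0 < R := by positivity
  refine le_trans (measure_mono ?_) (vol_lip_image hΦ.lipschitzOnWith)
  rintro p ⟨hpA, hpr⟩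
  have hΦx : Φ x = φ x := (hΦe hxA).symm
  obtain ⟨z, hzR, rfl⟩ := cover hΦ hΨ (x := x) (p := p) hR (by
    intro z hz
    obtain ⟨a, ha, haz⟩ := hnear z hz
    have haC := subset_closure ha
    have hfix : Ψ (Φ a) = a := by
      rw [← hΦe haC, ← hΨe (mem_image_of_mem φ haC), hinv a haC]
    have h1 := (hΨ.comp hΦ).dist_le_mul z a
    simp only [Function.comp_apply, hfix] at h1
    have h2 := dist_triangle (Ψ (Φ z)) a z
    rw [← dist_eq_norm]
    rw [dist_comm z a] at h1
    push_cast at h1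
    calc dist (Ψ (Φ z)) z ≤ (L' * K' + 1) * dist a z := by linarith
      _ ≤ (L' * K' + 1) * (1 / (128 * (K' + 1) * (L' + 1)) / (L' * K' + 1) * R) := by gcongr
      _ = _ := by field_simp) (by
    rw [hΦx, ← dist_eq_norm, hRdef]
    have := (mem_ball.1 hpr).le
    refine this.trans (le_of_eq ?_)
    field_simp)
  refine ⟨z, ⟨fun hzA => hpA ⟨z, hzA, hΦe (subset_closure hzA)⟩, ?_⟩, rfl⟩
  rw [mem_ball]
  have := mem_closedBall.1 hzR
  have e : 64 * ((L' : ℝ) + 1) * r = 2 * R := by rw [hRdef]; ring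
  linarith

theorem zero_of_not_closure {N : ℕ} {A : Set (EuclideanSpace ℝ (Fin N))} 
    {x : EuclideanSpace ℝ (Fin N)} (hx : x ∉ closure A) : x ∈ densityZeroPts A := by
  have h := isClosed_closure.isOpen_compl.mem_nhds (show x ∈ (closure A)ᶜ from hx)
  obtain ⟨ε, hε, hb⟩ := Metric.mem_nhds_iff.1 h
  refine tendsto_const_nhds.congr' ?_
  filter_upwards [Ioo_mem_nhdsGT hε] with r hr
  have : A ∩ ball x r = ∅ := by
    rw [← disjoint_iff_inter_eq_empty, Set.disjoint_left]
    intro a ha har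
    exact hb (ball_subset_ball hr.2.le har) (subset_closure ha)
  rw [this, measure_empty, ENNReal.zero_div]

theorem ess_sub {N : ℕ} {A : Set (EuclideanSpace ℝ (Fin N))} : essBdry A ⊆ closure A := by
  intro x hx
  by_contra h
  exact hx (Or.inr (zero_of_not_closure h))

theorem stmt_18 {N : ℕ} (G F : Set (EuclideanSpace ℝ (Fin N)))
    (φ ψ : EuclideanSpace ℝ (Fin N) → EuclideanSpace ℝ (Fin N)) (Kφ Kψ : ℝ≥0)
    (hφ : LipschitzOnWith Kφ φ G) (hψ : LipschitzOnWith Kψ ψ F)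
    (hbij : Set.BijOn φ G F) (hinv : Set.InvOn ψ φ G F)
    (A : Set (EuclideanSpace ℝ (Fin N))) (hA : MeasurableSet A)
    (hAG : closure A ⊆ G) (hAc : IsCompact (closure A))
    (hper : perim A Set.univ < ⊤) :
    essBdry (φ '' A) = φ '' essBdry A := by
  have hφ' := hφ.mono hAG
  have hinv' : ∀ z ∈ closure A, ψ (φ z) = z := fun z hz => hinv.1 (hAG hz)
  have hψ' : LipschitzOnWith Kψ ψ (φ '' closure A) := hψ.mono (by
    rintro _ ⟨a, ha, rfl⟩
    exact hbij.1 (hAG ha))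
  have hcl : closure (φ '' A) = φ '' closure A := by
    apply Subset.antisymm
    · exact closure_minimal (image_mono subset_closure)
        (hAc.image_of_continuousOn hφ'.continuousOn).isClosed
    · exact hφ'.continuousOn.image_closure
  have hinj : InjOn φ A := hbij.injOn.mono (subset_closure.trans hAG)
  have hA' : MeasurableSet (φ '' A) :=
    hA.image_of_continuousOn_injOn (hφ'.continuousOn.mono subset_closure) hinj
  have hback : ψ '' (φ '' A) = A := by
    rw [image_image]
    ext z
    constructor
    · rintro ⟨a, ha, rfl⟩
      simp only [hinv' a (subset_closure ha)]; exact ha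
    · intro hz
      exact ⟨z, hz, hinv' z (subset_closure hz)⟩
  have hback' : ψ '' (φ '' closure A) = closure A := by
    rw [image_image]
    ext z
    constructor
    · rintro ⟨a, ha, rfl⟩
      simp only [hinv' a ha]; exact ha
    · intro hz
      exact ⟨z, hz, hinv' z hz⟩
  have hinv2 : ∀ y ∈ closure (φ '' A), φ (ψ y) = y := by
    rw [hcl]
    rintro _ ⟨a, ha, rfl⟩
    rw [hinv' a ha]
  have hψ2 : LipschitzOnWith Kψ ψ (closure (φ '' A)) := by rw [hcl]; exact hψ'
  have hφ2 : LipschitzOnWith Kφ φ (ψ '' closure (φ '' A)) := by rw [hcl, hback']; exact hφ'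
  have key : ∀ x ∈ closure A, (φ x ∈ essBdry (φ '' A) ↔ x ∈ essBdry A) := by
    intro x hx
    have hx' : φ x ∈ closure (φ '' A) := by rw [hcl]; exact mem_image_of_mem φ hx
    have h1 : φ x ∈ densityOnePts (φ '' A) ↔ x ∈ densityOnePts A := by
      refine ⟨fun h => ?_, one_image hA hφ' hψ' hinv' hx⟩
      have := one_image hA' hψ2 hφ2 hinv2 hx' h
      rwa [hback, hinv' x hx] at this
    have h2 : φ x ∈ densityZeroPts (φ '' A) ↔ x ∈ densityZeroPts A := by
      refine ⟨fun h => ?_, zero_image hφ' hψ' hinv' hx⟩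
      have := zero_image hψ2 hφ2 hinv2 hx' h
      rwa [hback, hinv' x hx] at this
    simp only [essBdry, mem_compl_iff, mem_union, h1, h2]
  ext y
  constructor
  · intro hy
    have hyc := ess_sub hy
    rw [hcl] at hyc
    obtain ⟨x, hx, rfl⟩ := hyc
    exact ⟨x, (key x hx).1 hy, rfl⟩
  · rintro ⟨x, hx, rfl⟩
    exact (key x (ess_sub hx)).2 hx

end
end
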